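/- For every n ≥ 2 there exists δ = δ(n) > 0 with the following property: if K ⊂ ℝⁿ is an origin-symmetric convex body for which there exists T ∈ GL(n,ℝ) with B∞ⁿ ⊆ T(K) ⊆ (1+δ)·B∞ⁿ, then volₙ(K)·volₙ(K*) ≥ 𝒫(B∞ⁿ) = 4ⁿ/n!. -/

import Mathlib

open MeasureTheory RealInnerProductSpace ENNReal Pointwise

noncomputable section

/-- The unit cube `B∞ⁿ = {x : |xᵢ| ≤ 1 ∀ i}`. -/
def cube (n : ℕ) : Set (EuclideanSpace ℝ (Fin n)) := {x | ∀ i, |x i| ≤ 1}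

/-- The polar body `K* = {ξ : ⟨x, ξ⟩ ≤ 1 ∀ x ∈ K}`. -/
def polarBody {n : ℕ} (K : Set (EuclideanSpace ℝ (Fin n))) :
    Set (EuclideanSpace ℝ (Fin n)) :=
  {ξ | ∀ x ∈ K, ⟪x, ξ⟫ ≤ 1}

/-!
After an Auerbach-type normalisation (rows in `K*` maximising `|det|`), a body close to the cube
satisfies `eⱼ ∈ K ⊆ B∞ⁿ`, and `δ := max_{ξ ∈ K*} ‖ξ‖₁ - 1` is small; the claim has to be shown
with this `δ`, attained at some `ξ ∈ K*`.

The level sets of `|xᵢ|` write every `x` as a combination `∑ₚ cₚ(x) p` of nested sign vectors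
`p ∈ {-1, 0, 1}ⁿ`, with `cₚ ≥ 0`, `∑ₚ cₚ(x) = ‖x‖_∞` and `∑ₚ |supp p| cₚ(x) = ‖x‖₁`. Choose
`Xₚ ∈ K` and `Yₚ ∈ K*` with `⟨Xₚ, Yₚ⟩ = 1`, at distance `O(δ)` from `p` and `p / |supp p|`. The
maps `x ↦ ∑ₚ cₚ(x) Xₚ` and `y ↦ ∑ₚ cₚ(y) |supp p| Yₚ` send the cube into `K` and the cross-polytope
into `K*`. By hyperoctahedral symmetry the first-order changes of the two volumes are weighted sums
of `⟨Xₚ - p, p⟩` and `⟨|supp p| Yₚ - p, p⟩` with the same weights, so `⟨Xₚ, Yₚ⟩ = 1` makes them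
cancel up to `O(δ²)`. Finally `ξ` forces a point of `K` or of `K*` outside the range of the
corresponding map; adding a bump `min(c_r, c_s) w` towards it gains a volume of order `δ`, which
beats `O(δ²)`.
-/

section DetPerturbation

open Finset

variable {ι : Type*}

lemma abs_prod_one_add_sub_le {s : Finset ι} {a : ι → ℝ} {η : ℝ} (hη : η ≤ 1)
    (ha : ∀ i ∈ s, |a i| ≤ η) :
    |∏ i ∈ s, (1 + a i) - 1 - ∑ i ∈ s, a i| ≤ (2 ^ #s - 1 - #s) * η ^ 2 := by
  classical
  induction s using Finset.induction_on with
  | empty => simp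
  | insert j s hj ih =>
    set R := ∏ i ∈ s, (1 + a i) - 1 - ∑ i ∈ s, a i with hR
    set S := ∑ i ∈ s, a i
    set C : ℝ := 2 ^ #s - 1 - #s with hC
    have haj : |a j| ≤ η := ha j (mem_insert_self j s)
    have hη₀ : 0 ≤ η := (abs_nonneg _).trans haj
    have hR_le : |R| ≤ C * η ^ 2 := ih fun i hi => ha i (mem_insert_of_mem hi)
    have hS_le : |S| ≤ #s * η := by
      refine (abs_sum_le_sum_abs _ _).trans ?_
      simpa using sum_le_card_nsmul s _ η fun i hi => ha i (mem_insert_of_mem hi)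
    have hC₀ : 0 ≤ C := by
      have : ((#s + 1 : ℕ) : ℝ) ≤ 2 ^ #s := by exact_mod_cast (#s).lt_two_pow_self
      push_cast at this
      linarith
    have hRS : |R + S| ≤ (C + #s) * η := by
      have : C * η ^ 2 ≤ C * η := mul_le_mul_of_nonneg_left (by nlinarith) hC₀
      linarith [abs_add_le R S]
    rw [prod_insert hj, sum_insert hj, card_insert_of_notMem hj]
    calc |(1 + a j) * ∏ i ∈ s, (1 + a i) - 1 - (a j + S)| = |R + a j * (R + S)| := by
          congr 1; rw [hR]; ring
      _ ≤ |R| + |a j| * |R + S| := (abs_add_le _ _).trans_eq (by rw [abs_mul])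
      _ ≤ C * η ^ 2 + η * ((C + #s) * η) :=
          add_le_add hR_le (mul_le_mul haj hRS (abs_nonneg _) hη₀)
      _ = _ := by rw [hC]; push_cast; ring

variable [Fintype ι]

variable (ι) in
/-- Constant in the quadratic error term of `det (1 + M) = 1 + tr M + O(‖M‖²)`. -/
def detErrorConst : ℝ := (Fintype.card ι).factorial * 2 ^ Fintype.card ι

lemma detErrorConst_pos : 0 < detErrorConst ι := by
  unfold detErrorConst; positivity

variable [DecidableEq ι]

-- A permutation other than the identity moves at least two points.
lemma abs_prod_one_add_perm_le {M : Matrix ι ι ℝ} {η : ℝ} (hη : η ≤ 1)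
    (hM : ∀ i j, |M i j| ≤ η) {σ : Equiv.Perm ι} (hσ : σ ≠ 1) :
    |∏ i, (1 + M) (σ i) i| ≤ 2 ^ Fintype.card ι * η ^ 2 := by
  obtain ⟨i, hi⟩ : ∃ i, σ i ≠ i := by
    by_contra! h
    exact hσ (Equiv.ext h)
  have hσi : σ (σ i) ≠ σ i := fun h => hi (σ.injective h)
  have hη₀ : 0 ≤ η := (abs_nonneg _).trans (hM i i)
  have h_moved {k} (hk : σ k ≠ k) : |(1 + M) (σ k) k| ≤ η := by
    rw [Matrix.add_apply, Matrix.one_apply_ne hk, zero_add]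
    exact hM _ _
  have h_all (k) : |(1 + M) (σ k) k| ≤ 2 := by
    have : |(1 : Matrix ι ι ℝ) (σ k) k| ≤ 1 := by
      rw [Matrix.one_apply]; split_ifs <;> simp
    rw [Matrix.add_apply]
    linarith [abs_add_le ((1 : Matrix ι ι ℝ) (σ k) k) (M (σ k) k), hM (σ k) k]
  have h_rest : ∏ k ∈ (univ.erase i).erase (σ i), |(1 + M) (σ k) k| ≤ 2 ^ Fintype.card ι :=
    calc _ ≤ ∏ _k ∈ (univ.erase i).erase (σ i), (2 : ℝ) :=
          prod_le_prod (fun _ _ => abs_nonneg _) fun k _ => h_all k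
      _ ≤ 2 ^ Fintype.card ι := by
          rw [prod_const]
          exact pow_le_pow_right₀ (by norm_num) (card_le_univ _)
  rw [abs_prod, ← mul_prod_erase _ _ (mem_univ i),
    ← mul_prod_erase _ _ (mem_erase.2 ⟨hi, mem_univ (σ i)⟩)]
  calc _ ≤ η * (η * 2 ^ Fintype.card ι) :=
        mul_le_mul (h_moved hi) (mul_le_mul (h_moved hσi) h_rest (by positivity) hη₀)
          (by positivity) hη₀
    _ = 2 ^ Fintype.card ι * η ^ 2 := by ring

lemma abs_det_one_add_sub_le {M : Matrix ι ι ℝ} {η : ℝ} (hη : η ≤ 1)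
    (hM : ∀ i j, |M i j| ≤ η) :
    |(1 + M).det - 1 - M.trace| ≤ detErrorConst ι * η ^ 2 := by
  set n := Fintype.card ι with hn
  have h_id : |∏ i, (1 + M i i) - 1 - M.trace| ≤ (2 ^ n - 1 - n) * η ^ 2 := by
    simpa [Matrix.trace] using
      abs_prod_one_add_sub_le (s := univ) hη fun i _ => hM i i
  have h_card : (#(univ.erase (1 : Equiv.Perm ι)) : ℝ) = n.factorial - 1 := by
    rw [card_erase_of_mem (mem_univ _), card_univ, Fintype.card_perm, ← hn,
      Nat.cast_pred n.factorial_pos]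
  have h_ne : |∑ σ ∈ univ.erase (1 : Equiv.Perm ι),
      ((Equiv.Perm.sign σ : ℤ) : ℝ) * ∏ i, (1 + M) (σ i) i|
      ≤ (n.factorial - 1) * (2 ^ n * η ^ 2) := by
    refine (abs_sum_le_sum_abs _ _).trans ?_
    rw [← h_card, ← nsmul_eq_mul]
    refine sum_le_card_nsmul _ _ _ fun σ hσ => ?_
    have h_sign : |((Equiv.Perm.sign σ : ℤ) : ℝ)| = 1 := by
      rcases Int.units_eq_one_or (Equiv.Perm.sign σ) with h | h <;> simp [h]
    rw [abs_mul, h_sign, one_mul]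
    exact abs_prod_one_add_perm_le hη hM (ne_of_mem_erase hσ)
  rw [Matrix.det_apply', ← add_sum_erase _ _ (mem_univ (1 : Equiv.Perm ι))]
  have h_one : ((Equiv.Perm.sign (1 : Equiv.Perm ι) : ℤ) : ℝ)
      * ∏ i, (1 + M) ((1 : Equiv.Perm ι) i) i = ∏ i, (1 + M i i) := by simp
  rw [h_one]
  set P := ∏ i, (1 + M i i)
  set Q := ∑ σ ∈ univ.erase (1 : Equiv.Perm ι),
    ((Equiv.Perm.sign σ : ℤ) : ℝ) * ∏ i, (1 + M) (σ i) i
  calc |P + Q - 1 - M.trace| ≤ |P - 1 - M.trace| + |Q| :=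
        (abs_add_le _ _).trans' (le_of_eq (by congr 1; ring))
    _ ≤ (2 ^ n - 1 - n) * η ^ 2 + (n.factorial - 1) * (2 ^ n * η ^ 2) := add_le_add h_id h_ne
    _ = n.factorial * 2 ^ n * η ^ 2 - (1 + n) * η ^ 2 := by ring
    _ ≤ detErrorConst ι * η ^ 2 := sub_le_self _ (by positivity)

end DetPerturbation

section VolumePerturbation

variable {ι : Type*} [Fintype ι]

lemma one_add_trace_sub_le_det_id_add {L : (ι → ℝ) →L[ℝ] (ι → ℝ)} {η : ℝ} (hη : η ≤ 1)
    (hL : ‖L‖ ≤ η) :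
    1 + LinearMap.trace ℝ _ (L : (ι → ℝ) →ₗ[ℝ] (ι → ℝ)) - detErrorConst ι * η ^ 2
      ≤ (ContinuousLinearMap.id ℝ (ι → ℝ) + L).det := by
  classical
  set M := LinearMap.toMatrix' (L : (ι → ℝ) →ₗ[ℝ] (ι → ℝ)) with hM
  have h_entry (i j) : |M i j| ≤ η := by
    rw [hM, LinearMap.toMatrix'_apply]
    calc |L (Pi.single j 1) i| ≤ ‖L (Pi.single j 1)‖ := norm_le_pi_norm (L (Pi.single j 1)) i
      _ ≤ ‖L‖ * ‖(Pi.single j 1 : ι → ℝ)‖ := L.le_opNorm _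
      _ ≤ η := by simpa [Pi.norm_single] using hL
  have h_det : (ContinuousLinearMap.id ℝ (ι → ℝ) + L).det = (1 + M).det := by
    rw [ContinuousLinearMap.det, ← LinearMap.det_toMatrix']
    simp [hM]
  rw [h_det, LinearMap.trace_eq_matrix_trace ℝ (Pi.basisFun ℝ ι), LinearMap.toMatrix_eq_toMatrix',
    ← hM]
  linarith [(abs_le.1 (abs_det_one_add_sub_le hη h_entry)).1]

/-- The divergence of a vector field; it is `0` where the field is not differentiable. -/
def divergence (g : (ι → ℝ) → ι → ℝ) (x : ι → ℝ) : ℝ :=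
  LinearMap.trace ℝ _ (fderiv ℝ g x : (ι → ℝ) →ₗ[ℝ] (ι → ℝ))

/-- The mean of the divergence of a vector field over `B`: the first-order relative change of
volume of `B` under the flow of the field. -/
def meanDiv (B : Set (ι → ℝ)) (g : (ι → ℝ) → ι → ℝ) : ℝ :=
  ⨍ x in B, divergence g x

lemma abs_trace_le (L : (ι → ℝ) →L[ℝ] (ι → ℝ)) :
    |LinearMap.trace ℝ _ (L : (ι → ℝ) →ₗ[ℝ] (ι → ℝ))| ≤ Fintype.card ι * ‖L‖ := by
  classical
  rw [LinearMap.trace_eq_matrix_trace ℝ (Pi.basisFun ℝ ι), LinearMap.toMatrix_eq_toMatrix',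
    Matrix.trace]
  refine (Finset.abs_sum_le_sum_abs _ _).trans ?_
  rw [← nsmul_eq_mul]
  refine Finset.sum_le_card_nsmul _ _ _ fun i _ => ?_
  rw [Matrix.diag_apply, LinearMap.toMatrix'_apply]
  calc |L (Pi.single i 1) i| ≤ ‖L (Pi.single i 1)‖ := norm_le_pi_norm (L (Pi.single i 1)) i
    _ ≤ ‖L‖ * ‖(Pi.single i 1 : ι → ℝ)‖ := L.le_opNorm _
    _ = ‖L‖ := by simp [Pi.norm_single]

lemma ofReal_integral_le_lintegral {α : Type*} [MeasurableSpace α] {μ : Measure α} {f : α → ℝ}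
    (hf : Integrable f μ) : ENNReal.ofReal (∫ x, f x ∂μ) ≤ ∫⁻ x, ENNReal.ofReal (f x) ∂μ := by
  have h_pos : ∫ x, f x ∂μ ≤ ∫ x, max (f x) 0 ∂μ :=
    integral_mono hf hf.pos_part fun x => le_max_left _ _
  refine (ENNReal.ofReal_le_ofReal h_pos).trans_eq ?_
  rw [ofReal_integral_eq_lintegral_ofReal hf.pos_part (.of_forall fun x => le_max_right _ _)]
  simp [ENNReal.ofReal_max]

variable {g : (ι → ℝ) → ι → ℝ} {η : NNReal} {B : Set (ι → ℝ)}

lemma abs_divergence_le (hg : LipschitzWith η g) (x : ι → ℝ) :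
    |divergence g x| ≤ Fintype.card ι * η :=
  (abs_trace_le _).trans
    (mul_le_mul_of_nonneg_left (norm_fderiv_le_of_lipschitz ℝ hg) (Nat.cast_nonneg _))

lemma integrableOn_divergence (hg : LipschitzWith η g) (hB : volume B ≠ ⊤) :
    IntegrableOn (divergence g) B := by
  have h_meas : Measurable fun L : (ι → ℝ) →L[ℝ] (ι → ℝ) =>
      LinearMap.trace ℝ _ (L : (ι → ℝ) →ₗ[ℝ] (ι → ℝ)) :=
    (LinearMap.continuous_of_finiteDimensional
      ((LinearMap.trace ℝ (ι → ℝ)).comp (ContinuousLinearMap.coeLM ℝ))).measurable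
  exact Measure.integrableOn_of_bounded hB
    (h_meas.comp (measurable_fderiv ℝ g)).aestronglyMeasurable
    (.of_forall (abs_divergence_le hg))

lemma norm_average_le_of_norm_le {α E : Type*} [MeasurableSpace α] {μ : Measure α}
    [NormedAddCommGroup E] [NormedSpace ℝ E] {f : α → E} {C : ℝ} (hC : 0 ≤ C)
    (hf : ∀ x, ‖f x‖ ≤ C) : ‖⨍ x, f x ∂μ‖ ≤ C := by
  have h_univ : ((μ Set.univ)⁻¹ • μ) Set.univ ≤ 1 := ENNReal.inv_mul_le_one _
  have : IsFiniteMeasure ((μ Set.univ)⁻¹ • μ) := ⟨h_univ.trans_lt ENNReal.one_lt_top⟩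
  exact (norm_integral_le_of_norm_le_const (.of_forall hf)).trans
    (mul_le_of_le_one_right hC (ENNReal.toReal_le_of_le_ofReal zero_le_one (by simp)))

lemma abs_meanDiv_le (hg : LipschitzWith η g) : |meanDiv B g| ≤ Fintype.card ι * η :=
  norm_average_le_of_norm_le (f := divergence g) (by positivity) (abs_divergence_le hg)

lemma injective_id_add_of_lipschitzWith {E : Type*} [NormedAddCommGroup E] {g : E → E}
    (hg : LipschitzWith η g) (hη : η < 1) : Function.Injective fun x => x + g x :=
  (AntilipschitzWith.id.add_lipschitzWith hg (by simpa)).injective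

lemma lintegral_abs_det_le_volume_image_id_add (hg : LipschitzWith η g) (hη : η < 1)
    (hB : MeasurableSet B) :
    ∫⁻ x in B, ENNReal.ofReal |(ContinuousLinearMap.id ℝ (ι → ℝ) + fderiv ℝ g x).det|
      ≤ volume ((fun x => x + g x) '' B) := by
  set D := {x | DifferentiableAt ℝ g x}
  have hD_ae : (B ∩ D : Set (ι → ℝ)) =ᵐ[volume] B :=
    inter_ae_eq_left_of_ae_eq_univ (Filter.eventuallyEq_univ.2 hg.ae_differentiableAt)
  have h_deriv : ∀ x ∈ B ∩ D, HasFDerivWithinAt (fun x => x + g x)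
      (ContinuousLinearMap.id ℝ (ι → ℝ) + fderiv ℝ g x) (B ∩ D) x := fun x hx =>
    ((hasFDerivAt_id x).add hx.2.hasFDerivAt).hasFDerivWithinAt
  rw [← setLIntegral_congr hD_ae, lintegral_abs_det_fderiv_eq_addHaar_image volume
    (hB.inter (measurableSet_of_differentiableAt ℝ g)) h_deriv
    (injective_id_add_of_lipschitzWith hg hη).injOn]
  exact measure_mono (Set.image_mono Set.inter_subset_left)

lemma le_volume_image_id_add (hg : LipschitzWith η g) (hη : η < 1) (hB : MeasurableSet B)
    (hB_fin : volume B ≠ ⊤) :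
    ENNReal.ofReal (volume.real B * (1 + meanDiv B g - detErrorConst ι * η ^ 2))
      ≤ volume ((fun x => x + g x) '' B) := by
  set E := detErrorConst ι * η ^ 2
  have h_det (x) : 1 + divergence g x - E
      ≤ |(ContinuousLinearMap.id ℝ (ι → ℝ) + fderiv ℝ g x).det| :=
    (one_add_trace_sub_le_det_id_add (L := fderiv ℝ g x) (η := (η : ℝ)) (NNReal.coe_le_one.2 hη.le)
      (norm_fderiv_le_of_lipschitz ℝ hg)).trans (le_abs_self _)
  have : IsFiniteMeasure (volume.restrict B) := ⟨by simpa using hB_fin.lt_top⟩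
  have h_div : Integrable (divergence g) (volume.restrict B) :=
    integrableOn_divergence hg hB_fin
  have h_add : Integrable (fun x => 1 + divergence g x) (volume.restrict B) :=
    (integrable_const 1).add h_div
  have h_int : volume.real B * (1 + meanDiv B g - E) = ∫ x in B, (1 + divergence g x - E) := by
    rw [integral_sub h_add (integrable_const E), integral_add (integrable_const 1) h_div,
      ← measure_smul_setAverage (divergence g) hB_fin, meanDiv]
    simp only [integral_const, measureReal_restrict_apply_univ, smul_eq_mul]
    ring
  rw [h_int]
  exact (ofReal_integral_le_lintegral (h_add.sub (integrable_const E))).trans <|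
    (lintegral_mono fun x => ENNReal.ofReal_le_ofReal (h_det x)).trans
      (lintegral_abs_det_le_volume_image_id_add hg hη hB)

-- To second order, `(1 + d)(1 + d') = 1 + (d + d')`.
lemma volume_mul_volume_le_of_meanDiv {B' K L : Set (ι → ℝ)} {g' : (ι → ℝ) → ι → ℝ}
    (hg : LipschitzWith η g) (hg' : LipschitzWith η g') (hη : η < 1)
    (hB : MeasurableSet B) (hB' : MeasurableSet B')
    (hB_fin : volume B ≠ ⊤) (hB'_fin : volume B' ≠ ⊤)
    (hK : Set.MapsTo (fun x => x + g x) B K) (hL : Set.MapsTo (fun x => x + g' x) B' L)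
    (h_small : (Fintype.card ι + detErrorConst ι) * η ≤ 1)
    (h_gain : (2 * detErrorConst ι + (Fintype.card ι + detErrorConst ι) ^ 2) * η ^ 2
      ≤ meanDiv B g + meanDiv B' g') :
    volume B * volume B' ≤ volume K * volume L := by
  set n : ℝ := (Fintype.card ι : ℝ) with hn
  set C := detErrorConst ι
  have hC : 0 < C := detErrorConst_pos
  have hη₀ : (0 : ℝ) ≤ η := η.2
  have hη₁ : (η : ℝ) < 1 := hη
  obtain ⟨hd₁, hd₂⟩ := abs_le.1 (abs_meanDiv_le (B := B) hg)
  obtain ⟨hd'₁, hd'₂⟩ := abs_le.1 (abs_meanDiv_le (B := B') hg')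
  have h_vol := le_volume_image_id_add hg hη hB hB_fin
  have h_vol' := le_volume_image_id_add hg' hη hB' hB'_fin
  set d := meanDiv B g
  set d' := meanDiv B' g'
  rw [← hn] at hd₁ hd₂ hd'₁ hd'₂
  set A := d - C * η ^ 2 with hA
  set A' := d' - C * η ^ 2 with hA'
  have h_sq : C * (η : ℝ) ^ 2 ≤ C * η := mul_le_mul_of_nonneg_left (by nlinarith [hη₀, hη₁]) hC.le
  have h_A : |A| ≤ (n + C) * η := abs_le.2 ⟨by linarith, by nlinarith⟩
  have h_A' : |A'| ≤ (n + C) * η := abs_le.2 ⟨by linarith, by nlinarith⟩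
  have h_prod : 1 ≤ (1 + A) * (1 + A') := by
    have := mul_le_mul h_A h_A' (abs_nonneg _) ((abs_nonneg _).trans h_A)
    rw [← abs_mul] at this
    nlinarith [neg_abs_le (A * A')]
  have h_one_add : 0 ≤ 1 + A := by linarith [neg_abs_le A]
  calc volume B * volume B'
      = ENNReal.ofReal (volume.real B * volume.real B' * 1) := by
        rw [mul_one, ENNReal.ofReal_mul measureReal_nonneg, ofReal_measureReal hB_fin,
          ofReal_measureReal hB'_fin]
    _ ≤ ENNReal.ofReal (volume.real B * volume.real B' * ((1 + A) * (1 + A'))) := by gcongr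
    _ = ENNReal.ofReal (volume.real B * (1 + d - C * η ^ 2))
          * ENNReal.ofReal (volume.real B' * (1 + d' - C * η ^ 2)) := by
        rw [← ENNReal.ofReal_mul (mul_nonneg measureReal_nonneg (by linarith [h_one_add])), hA,
          hA']
        ring_nf
    _ ≤ volume K * volume L :=
        mul_le_mul' (h_vol.trans (measure_mono hK.image_subset))
          (h_vol'.trans (measure_mono hL.image_subset))

end VolumePerturbation

section FlagCoordinates

open Finset

lemma coe_sign_mul_self {a : SignType} (ha : a ≠ 0) : (a : ℝ) * a = 1 := by
  cases a <;> simp_all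

lemma abs_sign_le_one (a : SignType) : |(a : ℝ)| ≤ 1 := by
  cases a <;> simp

lemma ite_sign_eq_iff {x s : ℝ} (hs : 0 ≤ s) (a : SignType) :
    (if s < |x| then SignType.sign x else 0) = a
      ↔ (a ≠ 0 → s < a * x) ∧ (a = 0 → |x| ≤ s) := by
  rcases lt_trichotomy x 0 with hx | rfl | hx
  · rw [sign_neg hx, abs_of_neg hx]
    by_cases h : s < -x <;> cases a <;> simp [h] <;> linarith
  · cases a <;> simp <;> linarith
  · rw [sign_pos hx, abs_of_pos hx]
    by_cases h : s < x <;> cases a <;> simp [h] <;> linarith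

variable {ι : Type*}

/-- The sign pattern of `x` at level `s`: the signs of the coordinates exceeding `s` in absolute
value, and `0` for the others. -/
def levelPattern (x : ι → ℝ) (s : ℝ) : ι → SignType :=
  fun i => if s < |x i| then SignType.sign (x i) else 0

/-- The real vector with entries in `{-1, 0, 1}` of a sign pattern. It is the centre of a face of
the cube, and divided by the number of its nonzero entries the centre of a face of the
cross-polytope. -/
def signVec (p : ι → SignType) : ι → ℝ := fun i => p i

/-- `p` is obtained from `q` by replacing some of its entries by `0`. -/
def IsSubpattern (p q : ι → SignType) : Prop := ∀ i, p i ≠ 0 → q i = p i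

lemma signVec_zero : signVec (0 : ι → SignType) = 0 := by
  ext; simp [signVec]

lemma abs_signVec_le_one (p : ι → SignType) (i : ι) : |signVec p i| ≤ 1 := abs_sign_le_one (p i)

lemma IsSubpattern.refl (p : ι → SignType) : IsSubpattern p p := fun _ _ => rfl

lemma IsSubpattern.eq_zero {p q : ι → SignType} (h : IsSubpattern p q) {i : ι} (hi : q i = 0) :
    p i = 0 := by
  by_contra hp
  exact hp ((h i hp).symm.trans hi)

lemma levelPattern_eq_iff {x : ι → ℝ} {s : ℝ} (hs : 0 ≤ s) {p : ι → SignType} :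
    levelPattern x s = p ↔ ∀ i, (p i ≠ 0 → s < p i * x i) ∧ (p i = 0 → |x i| ≤ s) :=
  funext_iff.trans (forall_congr' fun i => ite_sign_eq_iff hs (p i))

/-- The least value of `p i * x i` over the support of `p`. It is `0` for `p = 0`. -/
def minOnSupport (p : ι → SignType) (x : ι → ℝ) : ℝ := ⨅ i : {i // p i ≠ 0}, (p i : ℝ) * x i

variable {p : ι → SignType} {x : ι → ℝ} {c : ℝ}

lemma exists_minOnSupport_eq [Finite ι] (hp : p ≠ 0) (x : ι → ℝ) :
    ∃ i, p i ≠ 0 ∧ p i * x i = minOnSupport p x := by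
  obtain ⟨i, hi⟩ := Function.ne_iff.1 hp
  have : Nonempty {i // p i ≠ 0} := ⟨i, hi⟩
  obtain ⟨j, hj⟩ := exists_eq_ciInf_of_finite (f := fun i : {i // p i ≠ 0} => (p i : ℝ) * x i)
  exact ⟨j, j.2, hj⟩

lemma minOnSupport_le [Finite ι] {i : ι} (hi : p i ≠ 0) : minOnSupport p x ≤ p i * x i :=
  ciInf_le (Finite.bddBelow_range fun i : {i // p i ≠ 0} => (p i : ℝ) * x i) ⟨i, hi⟩

lemma le_minOnSupport_iff [Finite ι] (hp : p ≠ 0) :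
    c ≤ minOnSupport p x ↔ ∀ i, p i ≠ 0 → c ≤ p i * x i := by
  obtain ⟨j, hj, hj_eq⟩ := exists_minOnSupport_eq hp x
  exact ⟨fun h i hi => h.trans (minOnSupport_le hi), fun h => hj_eq ▸ h j hj⟩

lemma lt_minOnSupport_iff [Finite ι] (hp : p ≠ 0) :
    c < minOnSupport p x ↔ ∀ i, p i ≠ 0 → c < p i * x i := by
  obtain ⟨j, hj, hj_eq⟩ := exists_minOnSupport_eq hp x
  exact ⟨fun h i hi => h.trans_le (minOnSupport_le hi), fun h => hj_eq ▸ h j hj⟩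

lemma minOnSupport_add_smul_self [Finite ι] (hp : p ≠ 0) (x : ι → ℝ) (t : ℝ) :
    minOnSupport p (x + t • signVec p) = minOnSupport p x + t := by
  have h_shift {i : ι} (hi : p i ≠ 0) : p i * (x + t • signVec p) i = p i * x i + t := by
    simp only [Pi.add_apply, Pi.smul_apply, smul_eq_mul, signVec]
    linear_combination t * coe_sign_mul_self hi
  refine le_antisymm ?_ ?_
  · rw [← sub_le_iff_le_add, le_minOnSupport_iff hp]
    intro i hi
    rw [sub_le_iff_le_add, ← h_shift hi]
    exact minOnSupport_le hi
  · rw [le_minOnSupport_iff hp]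
    intro i hi
    rw [h_shift hi]
    exact add_le_add_left (minOnSupport_le hi) t

variable [Fintype ι]

/-- The set of indices where a sign pattern is nonzero. -/
def signSupport (p : ι → SignType) : Finset ι := univ.filter fun i => p i ≠ 0

lemma mem_signSupport {p : ι → SignType} {i : ι} : i ∈ signSupport p ↔ p i ≠ 0 := by
  simp [signSupport]

lemma card_signSupport_pos {p : ι → SignType} (hp : p ≠ 0) : 0 < #(signSupport p) := by
  obtain ⟨i, hi⟩ := Function.ne_iff.1 hp
  exact card_pos.2 ⟨i, mem_signSupport.2 hi⟩

lemma norm_signVec_le_one (p : ι → SignType) : ‖signVec p‖ ≤ 1 :=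
  (pi_norm_le_iff_of_nonneg zero_le_one).2 (abs_signVec_le_one p)

lemma sum_abs_signVec (p : ι → SignType) : ∑ i, |signVec p i| = #(signSupport p) := by
  rw [signSupport, card_filter]
  push_cast
  refine sum_congr rfl fun i _ => ?_
  unfold signVec
  generalize p i = a
  cases a <;> simp

lemma signVec_dotProduct_self (p : ι → SignType) : signVec p ⬝ᵥ signVec p = #(signSupport p) := by
  rw [← sum_abs_signVec]
  refine sum_congr rfl fun i _ => ?_
  unfold signVec
  generalize p i = a
  cases a <;> simp

/-- The largest value of `|x i|` off the support of `p`, or `0` if there is no such `i`. -/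
def maxOffSupport (p : ι → SignType) (x : ι → ℝ) : ℝ :=
  ‖(fun i => if p i = 0 then x i else 0 : ι → ℝ)‖

/-- The length of the interval of levels at which `x` has the sign pattern `p`. On each cone
spanned by a flag of faces of the cube, these are the coordinates of `x` with respect to the
vectors `signVec p`. -/
def flagCoord (p : ι → SignType) (x : ι → ℝ) : ℝ := max (minOnSupport p x - maxOffSupport p x) 0

variable {q : ι → SignType} {y : ι → ℝ} {t : ℝ}

lemma maxOffSupport_nonneg : 0 ≤ maxOffSupport p x := norm_nonneg _

lemma maxOffSupport_le_iff (hc : 0 ≤ c) :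
    maxOffSupport p x ≤ c ↔ ∀ i, p i = 0 → |x i| ≤ c := by
  rw [maxOffSupport, pi_norm_le_iff_of_nonneg hc]
  refine forall_congr' fun i => ?_
  by_cases h : p i = 0 <;> simp [h, hc]

lemma abs_le_maxOffSupport {i : ι} (hi : p i = 0) : |x i| ≤ maxOffSupport p x :=
  (maxOffSupport_le_iff maxOffSupport_nonneg).1 le_rfl i hi

lemma flagCoord_nonneg (p : ι → SignType) (x : ι → ℝ) : 0 ≤ flagCoord p x := le_max_right _ _

lemma flagCoord_zero_left (x : ι → ℝ) : flagCoord 0 x = 0 := by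
  have : IsEmpty {i : ι // (0 : ι → SignType) i ≠ 0} := ⟨fun i => i.2 rfl⟩
  rw [flagCoord, minOnSupport, Real.iInf_of_isEmpty, zero_sub]
  exact max_eq_right (neg_nonpos.2 maxOffSupport_nonneg)

lemma flagCoord_eq_sub (h : 0 < flagCoord p x) :
    flagCoord p x = minOnSupport p x - maxOffSupport p x := by
  refine max_eq_left_of_lt ?_
  by_contra! h_le
  exact h.ne' (max_eq_right h_le)

lemma setOf_levelPattern_eq (hp : p ≠ 0) (x : ι → ℝ) :
    {s | 0 ≤ s ∧ levelPattern x s = p} = Set.Ico (maxOffSupport p x) (minOnSupport p x) := by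
  ext s
  constructor
  · rintro ⟨hs, h⟩
    rw [levelPattern_eq_iff hs] at h
    exact ⟨(maxOffSupport_le_iff hs).2 fun i => (h i).2,
      (lt_minOnSupport_iff hp).2 fun i => (h i).1⟩
  · rintro ⟨h_off, h_on⟩
    have hs : 0 ≤ s := maxOffSupport_nonneg.trans h_off
    exact ⟨hs, (levelPattern_eq_iff hs).2 fun i =>
      ⟨(lt_minOnSupport_iff hp).1 h_on i, (maxOffSupport_le_iff hs).1 h_off i⟩⟩

lemma flagCoord_eq_volume (hp : p ≠ 0) (x : ι → ℝ) :
    flagCoord p x = volume.real {s | 0 ≤ s ∧ levelPattern x s = p} := by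
  rw [setOf_levelPattern_eq hp, Real.volume_real_Ico, flagCoord]

lemma flagCoord_pos_iff (hp : p ≠ 0) :
    0 < flagCoord p x ↔ ∃ s, 0 ≤ s ∧ levelPattern x s = p := by
  have : (∃ s, 0 ≤ s ∧ levelPattern x s = p)
      ↔ (Set.Ico (maxOffSupport p x) (minOnSupport p x)).Nonempty := by
    rw [← setOf_levelPattern_eq hp]; rfl
  rw [this, Set.nonempty_Ico, flagCoord]
  simp

lemma minOnSupport_le_add (hp : p ≠ 0) (x y : ι → ℝ) :
    minOnSupport p x ≤ minOnSupport p y + ‖x - y‖ := by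
  rw [← sub_le_iff_le_add, le_minOnSupport_iff hp]
  intro i hi
  have h_diff : |(p i : ℝ) * (x i - y i)| ≤ ‖x - y‖ := by
    rw [abs_mul]
    exact (mul_le_of_le_one_left (abs_nonneg _) (abs_sign_le_one _)).trans
      (norm_le_pi_norm (x - y) i)
  linarith [minOnSupport_le (x := x) hi, (abs_le.1 h_diff).2]

lemma maxOffSupport_le_add (p : ι → SignType) (x y : ι → ℝ) :
    maxOffSupport p x ≤ maxOffSupport p y + ‖x - y‖ := by
  rw [maxOffSupport_le_iff (add_nonneg maxOffSupport_nonneg (norm_nonneg _))]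
  intro i hi
  have h_diff : |x i - y i| ≤ ‖x - y‖ := norm_le_pi_norm (x - y) i
  linarith [abs_le_maxOffSupport (x := y) hi, abs_sub_abs_le_abs_sub (x i) (y i)]

lemma lipschitzWith_flagCoord (p : ι → SignType) : LipschitzWith 2 (flagCoord p) := by
  rcases eq_or_ne p 0 with rfl | hp
  · simpa only [funext flagCoord_zero_left] using LipschitzWith.const' (0 : ℝ)
  refine LipschitzWith.of_le_add_mul _ fun x y => ?_
  rw [dist_eq_norm, NNReal.coe_ofNat]
  have h_off := maxOffSupport_le_add p y x
  rw [norm_sub_rev] at h_off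
  have h_y : minOnSupport p y - maxOffSupport p y ≤ flagCoord p y := le_max_left _ _
  exact max_le (by linarith [minOnSupport_le_add hp x y])
    (by linarith [flagCoord_nonneg p y, norm_nonneg (x - y)])

lemma continuous_flagCoord (p : ι → SignType) : Continuous (flagCoord p) :=
  (lipschitzWith_flagCoord p).continuous

end FlagCoordinates

section FlagDecomposition

open Finset

variable {ι : Type*} [Fintype ι]

lemma sum_indicator_levelPattern [DecidableEq ι] (w : (ι → SignType) → ℝ) (x : ι → ℝ) (s : ℝ) :
    ∑ p, {s : ℝ | 0 ≤ s ∧ levelPattern x s = p}.indicator (fun _ => w p) s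
      = (Set.Ici 0).indicator (fun s => w (levelPattern x s)) s := by
  by_cases hs : 0 ≤ s
  · rw [sum_eq_single (levelPattern x s), Set.indicator_of_mem (by exact ⟨hs, rfl⟩),
      Set.indicator_of_mem (by exact hs)]
    · exact fun p _ hp => Set.indicator_of_notMem (fun h => hp h.2.symm) _
    · simp
  · rw [Set.indicator_of_notMem (by exact hs)]
    exact sum_eq_zero fun p _ => Set.indicator_of_notMem (fun h => hs h.1) _

variable [DecidableEq ι]

lemma sum_mul_flagCoord {w : (ι → SignType) → ℝ} (hw : w 0 = 0) (x : ι → ℝ) :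
    ∑ p, w p * flagCoord p x = ∫ s in Set.Ici (0 : ℝ), w (levelPattern x s) := by
  have h_meas {p : ι → SignType} (hp : p ≠ 0) :
      MeasurableSet {s : ℝ | 0 ≤ s ∧ levelPattern x s = p} := by
    rw [setOf_levelPattern_eq hp]; exact measurableSet_Ico
  have h_integral (p : ι → SignType) :
      ∫ s, {s : ℝ | 0 ≤ s ∧ levelPattern x s = p}.indicator (fun _ => w p) s
        = w p * flagCoord p x := by
    rcases eq_or_ne p 0 with rfl | hp
    · simp [hw]
    · rw [integral_indicator_const _ (h_meas hp), flagCoord_eq_volume hp, smul_eq_mul, mul_comm]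
  have h_integrable (p : ι → SignType) :
      Integrable ({s : ℝ | 0 ≤ s ∧ levelPattern x s = p}.indicator fun _ => w p) := by
    rcases eq_or_ne p 0 with rfl | hp
    · simp [hw]
    · rw [integrable_indicator_iff (h_meas hp), setOf_levelPattern_eq hp]
      simp
  simp_rw [← h_integral]
  rw [← integral_finsetSum _ fun p _ => h_integrable p, ← integral_indicator measurableSet_Ici]
  simp_rw [sum_indicator_levelPattern]

lemma setIntegral_Ici_ite_lt {c : ℝ} (hc : 0 ≤ c) (k : ℝ) :
    ∫ s in Set.Ici (0 : ℝ), (if s < c then k else 0) = c * k := by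
  have : (fun s => if s < c then k else 0) = (Set.Iio c).indicator fun _ => k := by
    ext s; simp [Set.indicator_apply]
  rw [this, setIntegral_indicator measurableSet_Iio, Set.Ici_inter_Iio, setIntegral_const,
    Real.volume_real_Ico, sub_zero, max_eq_left hc, smul_eq_mul]

lemma sum_flagCoord_smul_signVec (x : ι → ℝ) : ∑ p, flagCoord p x • signVec p = x := by
  ext i
  have h := sum_mul_flagCoord (w := fun p => signVec p i) (by simp [signVec]) x
  simp only [signVec, levelPattern, apply_ite (fun a : SignType => (a : ℝ)),
    SignType.coe_zero] at h
  rw [setIntegral_Ici_ite_lt (abs_nonneg _), mul_comm, sign_mul_abs] at h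
  simpa [signVec, mul_comm] using h

lemma sum_card_mul_flagCoord (x : ι → ℝ) :
    ∑ p, #(signSupport p) * flagCoord p x = ∑ i, |x i| := by
  have h_abs (i : ι) : ∑ p, |signVec p i| * flagCoord p x = |x i| := by
    rw [sum_mul_flagCoord (w := fun p => |signVec p i|) (by simp [signVec]),
      ← mul_one |x i|, ← setIntegral_Ici_ite_lt (abs_nonneg (x i)) 1]
    refine setIntegral_congr_fun measurableSet_Ici fun s hs => ?_
    simp only [signVec, levelPattern]
    split_ifs with h
    · have hx : x i ≠ 0 := abs_pos.1 (lt_of_le_of_lt hs h)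
      rcases hx.lt_or_gt with hx | hx <;> simp [sign_neg, sign_pos, hx]
    · simp
  simp_rw [← h_abs, ← sum_abs_signVec, sum_mul]
  exact sum_comm

lemma sum_flagCoord (x : ι → ℝ) : ∑ p, flagCoord p x = ‖x‖ := by
  have h := sum_mul_flagCoord (w := fun p : ι → SignType => if p = 0 then 0 else 1) (by simp) x
  have h_level : ∫ s in Set.Ici (0 : ℝ), (if levelPattern x s = 0 then (0 : ℝ) else 1)
      = ∫ s in Set.Ici (0 : ℝ), (if s < ‖x‖ then 1 else 0) := by
    refine setIntegral_congr_fun measurableSet_Ici fun s hs => ?_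
    have : levelPattern x s = 0 ↔ ‖x‖ ≤ s := by
      rw [levelPattern_eq_iff hs, pi_norm_le_iff_of_nonneg hs]
      simp
    simp only [this, ← not_lt, ite_not]
  rw [h_level, setIntegral_Ici_ite_lt (norm_nonneg x), mul_one] at h
  rw [← h]
  refine sum_congr rfl fun p _ => ?_
  split_ifs with hp
  · rw [hp, flagCoord_zero_left, zero_mul]
  · rw [one_mul]

end FlagDecomposition

section FlagShift

open Finset

variable {ι : Type*} [Fintype ι] {p q : ι → SignType} {x : ι → ℝ} {t : ℝ}

lemma flagCoord_le_add_smul_of_subpattern (h : IsSubpattern p q) (x : ι → ℝ) (ht : 0 ≤ t) :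
    flagCoord p x ≤ flagCoord p (x + t • signVec q) := by
  rcases eq_or_ne p 0 with rfl | hp
  · simp only [flagCoord_zero_left, le_refl]
  have h_on : minOnSupport p x + t ≤ minOnSupport p (x + t • signVec q) := by
    rw [le_minOnSupport_iff hp]
    intro i hi
    have := minOnSupport_le (x := x) hi
    simp only [Pi.add_apply, Pi.smul_apply, smul_eq_mul, signVec, h i hi]
    linear_combination this - t * coe_sign_mul_self hi
  have h_off : maxOffSupport p (x + t • signVec q) ≤ maxOffSupport p x + t := by
    refine (maxOffSupport_le_add p _ x).trans (add_le_add_right ?_ _)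
    rw [add_sub_cancel_left, norm_smul, Real.norm_of_nonneg ht]
    exact mul_le_of_le_one_right ht (norm_signVec_le_one q)
  exact max_le_max (by linarith) le_rfl

lemma maxOffSupport_add_smul (h : IsSubpattern q p) (x : ι → ℝ) (t : ℝ) :
    maxOffSupport p (x + t • signVec q) = maxOffSupport p x := by
  unfold maxOffSupport
  congr 1
  ext i
  split_ifs with hp
  · simp [signVec, h.eq_zero hp]
  · rfl

lemma flagCoord_le_add_smul_of_superpattern (h : IsSubpattern q p) (x : ι → ℝ) (ht : 0 ≤ t) :
    flagCoord p x ≤ flagCoord p (x + t • signVec q) := by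
  rcases eq_or_ne p 0 with rfl | hp
  · simp only [flagCoord_zero_left, le_refl]
  have h_on : minOnSupport p x ≤ minOnSupport p (x + t • signVec q) := by
    rw [le_minOnSupport_iff hp]
    intro i hi
    have h_le := minOnSupport_le (x := x) hi
    simp only [Pi.add_apply, Pi.smul_apply, smul_eq_mul, signVec]
    rcases eq_or_ne (q i) 0 with hq | hq
    · simpa [hq] using h_le
    · rw [h i hq] at h_le ⊢
      linear_combination h_le + ht - t * coe_sign_mul_self hq
  unfold flagCoord
  rw [maxOffSupport_add_smul h]
  exact max_le_max (by linarith) le_rfl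

lemma flagCoord_add_smul_self (h_pos : 0 < flagCoord p x) (ht : 0 ≤ flagCoord p x + t) :
    flagCoord p (x + t • signVec p) = flagCoord p x + t := by
  have hp : p ≠ 0 := by
    rintro rfl
    exact h_pos.ne' (flagCoord_zero_left x)
  rw [flagCoord_eq_sub h_pos] at ht ⊢
  rw [flagCoord, minOnSupport_add_smul_self hp, maxOffSupport_add_smul (.refl p)]
  rw [max_eq_left (by linarith)]
  ring

end FlagShift

section FlagCovering

open Finset

variable {ι : Type*} [Fintype ι] {p q : ι → SignType} {x : ι → ℝ} {α β : ℝ}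

lemma flagCoord_add_left_of_isSubpattern (h : IsSubpattern p q) (hpq : p ≠ q) (hp : p ≠ 0)
    (hα : 0 ≤ α) (hβ : 0 ≤ β) : flagCoord p (α • signVec p + β • signVec q) = α := by
  set x := α • signVec p + β • signVec q with hx
  have h_on : ∀ i, p i ≠ 0 → p i * x i = α + β := fun i hi => by
    simp only [hx, Pi.add_apply, Pi.smul_apply, signVec, smul_eq_mul, h i hi]
    linear_combination (α + β) * coe_sign_mul_self hi
  have h_off : ∀ i, p i = 0 → x i = β * q i := fun i hi => by simp [hx, signVec, hi]
  have h_min : minOnSupport p x = α + β := by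
    obtain ⟨i, hi, hi_eq⟩ := exists_minOnSupport_eq hp x
    rw [← hi_eq, h_on i hi]
  have h_max : maxOffSupport p x = β := by
    obtain ⟨j, hj⟩ := Function.ne_iff.1 hpq
    have hpj : p j = 0 := by_contra fun hpj => hj (h j hpj).symm
    have hqj : |(q j : ℝ)| = 1 := by
      rw [hpj] at hj
      generalize q j = a at hj
      cases a <;> simp_all
    refine le_antisymm ((maxOffSupport_le_iff hβ).2 fun i hi => ?_) ?_
    · rw [h_off i hi, abs_mul, abs_of_nonneg hβ]
      exact mul_le_of_le_one_right hβ (abs_sign_le_one _)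
    · simpa [h_off j hpj, abs_mul, hqj, abs_of_nonneg hβ] using abs_le_maxOffSupport (x := x) hpj
  rw [flagCoord, h_min, h_max, add_sub_cancel_right, max_eq_left hα]

lemma flagCoord_add_right_of_isSubpattern (h : IsSubpattern p q) (hpq : p ≠ q)
    (hα : 0 ≤ α) (hβ : 0 ≤ β) : flagCoord q (α • signVec p + β • signVec q) = β := by
  set x := α • signVec p + β • signVec q with hx
  obtain ⟨j, hj⟩ := Function.ne_iff.1 hpq
  have hpj : p j = 0 := by_contra fun hpj => hj (h j hpj).symm
  have hqj : q j ≠ 0 := fun hqj => hj (hpj.trans hqj.symm)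
  have hq : q ≠ 0 := fun hq => hqj (congrFun hq j)
  have h_min : minOnSupport q x = β := by
    refine le_antisymm ((minOnSupport_le hqj).trans_eq ?_)
      ((le_minOnSupport_iff hq).2 fun i hi => ?_)
    · simp only [hx, Pi.add_apply, Pi.smul_apply, signVec, smul_eq_mul, hpj, SignType.coe_zero]
      linear_combination β * coe_sign_mul_self hqj
    · have h_prod : 0 ≤ (q i : ℝ) * p i := by
        by_cases hpi : p i = 0
        · simp [hpi]
        · simpa only [h i hpi] using mul_self_nonneg (p i : ℝ)
      simp only [hx, Pi.add_apply, Pi.smul_apply, signVec, smul_eq_mul]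
      linear_combination α * h_prod - β * coe_sign_mul_self hi
  have h_max : maxOffSupport q x = 0 := by
    refine le_antisymm ((maxOffSupport_le_iff le_rfl).2 fun i hi => ?_) maxOffSupport_nonneg
    simp [hx, signVec, hi, h.eq_zero hi]
  rw [flagCoord, h_min, h_max, sub_zero, max_eq_left hβ]

lemma exists_nonneg_card_filter_lt_eq {f : ι → ℝ} (hf : f.Injective) (hf_pos : ∀ i, 0 < f i)
    {k : ℕ} (hk : k ≤ Fintype.card ι) : ∃ s, 0 ≤ s ∧ #{i | s < f i} = k := by
  refine Nat.decreasingInduction (motive := fun k _ => ∃ s, 0 ≤ s ∧ #{i | s < f i} = k)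
    (fun k _ ih => ?_) ⟨0, le_rfl, by simp [hf_pos]⟩ hk
  obtain ⟨s, _, hs_card⟩ := ih
  obtain ⟨i, hi, hi_min⟩ := exists_min_image {i | s < f i} f (card_pos.1 (by omega))
  refine ⟨f i, (hf_pos i).le, ?_⟩
  classical
  have h_erase : ({j | f i < f j} : Finset ι) = ({j | s < f j} : Finset ι).erase i := by
    ext j
    simp only [mem_filter_univ, mem_erase] at hi hi_min ⊢
    refine ⟨fun hj => ⟨fun hji => hj.ne (by rw [hji]), hi.trans hj⟩, fun hj => ?_⟩
    exact (hi_min j hj.2).lt_of_ne fun h => hj.1 (hf h).symm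
  rw [h_erase, card_erase_of_mem hi, hs_card, Nat.add_sub_cancel]

lemma signSupport_levelPattern (hx : ∀ i, x i ≠ 0) (s : ℝ) :
    signSupport (levelPattern x s) = univ.filter fun i => s < |x i| := by
  ext i
  by_cases h : s < |x i| <;> simp [mem_signSupport, levelPattern, h, hx i]

lemma existsUnique_card_signSupport_eq (hx : ∀ i, x i ≠ 0) (hx_inj : (fun i => |x i|).Injective)
    {k : ℕ} (hk : 1 ≤ k) (hk' : k ≤ Fintype.card ι) :
    ∃! p : ι → SignType, #(signSupport p) = k ∧ 0 < flagCoord p x := by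
  have ne_zero : ∀ p : ι → SignType, #(signSupport p) = k → p ≠ 0 := by
    rintro p hp rfl
    rw [← hp] at hk
    simp [signSupport] at hk
  obtain ⟨s, hs, hs_card⟩ :=
    exists_nonneg_card_filter_lt_eq hx_inj (fun i => abs_pos.2 (hx i)) hk'
  replace hs_card : #(signSupport (levelPattern x s)) = k := by
    rw [signSupport_levelPattern hx, ← hs_card]
  refine ⟨levelPattern x s, ⟨hs_card, (flagCoord_pos_iff (ne_zero _ hs_card)).2 ⟨s, hs, rfl⟩⟩, ?_⟩
  rintro q ⟨hq_card, hq_pos⟩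
  obtain ⟨r, -, rfl⟩ := (flagCoord_pos_iff (ne_zero _ hq_card)).1 hq_pos
  have h_mono : ∀ s r : ℝ, s ≤ r →
      signSupport (levelPattern x r) ⊆ signSupport (levelPattern x s) := by
    intro s r hsr
    rw [signSupport_levelPattern hx, signSupport_levelPattern hx]
    exact monotone_filter_right _ fun i _ hi => hsr.trans_lt hi
  have h_eq : signSupport (levelPattern x r) = signSupport (levelPattern x s) := by
    rcases le_total s r with h | h
    · exact eq_of_subset_of_card_le (h_mono s r h) (by rw [hs_card, hq_card])
    · exact (eq_of_subset_of_card_le (h_mono r s h) (by rw [hs_card, hq_card])).symm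
  funext i
  have h_iff := Finset.ext_iff.1 h_eq i
  simp only [signSupport_levelPattern hx, mem_filter_univ] at h_iff
  simp [levelPattern, h_iff]

end FlagCovering

section SignedPermutations

open Finset

variable {ι : Type*}

lemma abs_coe_signUnit (a : SignTypeˣ) : |((a : SignType) : ℝ)| = 1 := by
  have ha := a.ne_zero
  generalize (a : SignType) = b at ha
  cases b <;> simp_all

lemma sign_signUnit_mul (a : SignTypeˣ) (x : ℝ) :
    SignType.sign (((a : SignType) : ℝ) * x) = a * SignType.sign x := by
  rw [sign_mul]
  generalize (a : SignType) = b
  cases b <;> simp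

/-- The action of a signed permutation on sign patterns. -/
def permPattern (π : Equiv.Perm ι) (ε : ι → SignTypeˣ) (p : ι → SignType) : ι → SignType :=
  fun i => ε i * p (π i)

variable {π : Equiv.Perm ι} {ε : ι → SignTypeˣ} {p q : ι → SignType}

lemma permPattern_injective : (permPattern π ε).Injective := fun p q h => by
  funext i
  simpa [permPattern] using congrFun h (π.symm i)

lemma permPattern_zero : permPattern π ε 0 = 0 := by
  funext i
  simp [permPattern]

/-- The sign carrying `a` to `b` if both are nonzero, and `1` otherwise. -/
def transportSign (a b : SignType) : SignTypeˣ := if h : a * b = 0 then 1 else Units.mk0 (a * b) h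

lemma transportSign_mul {a b : SignType} (h : a = 0 ↔ b = 0) :
    (transportSign a b : SignType) * a = b := by
  unfold transportSign
  split_ifs with h0
  · have hab : a = 0 ∧ b = 0 := by simpa [h] using h0
    simp [hab.1, hab.2]
  · rw [Units.val_mk0]
    revert a b
    decide

lemma coe_transportSign {a b : SignType} (ha : a ≠ 0) (hb : b ≠ 0) :
    (transportSign a b : SignType) = a * b := by
  simp [transportSign, ha, hb]

variable [Fintype ι]

/-- The linear isometry of the sup norm which permutes the coordinates and changes their signs. -/
def signedPerm (π : Equiv.Perm ι) (ε : ι → SignTypeˣ) : (ι → ℝ) ≃ₗᵢ[ℝ] (ι → ℝ) where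
  toFun x i := ((ε i : SignType) : ℝ) * x (π i)
  invFun x i := ((ε (π.symm i) : SignType) : ℝ) * x (π.symm i)
  map_add' x y := by ext i; simp [mul_add]
  map_smul' c x := by ext i; simp; ring
  left_inv x := by ext i; simp [← mul_assoc, coe_sign_mul_self]
  right_inv x := by ext i; simp [← mul_assoc, coe_sign_mul_self]
  norm_map' x := by
    have h_abs (i) : ‖((ε i : SignType) : ℝ) * x (π i)‖ = ‖x (π i)‖ := by
      rw [norm_mul, Real.norm_eq_abs, abs_coe_signUnit, one_mul]
    refine le_antisymm ((pi_norm_le_iff_of_nonneg (norm_nonneg _)).2 fun i => ?_)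
      ((pi_norm_le_iff_of_nonneg (norm_nonneg _)).2 fun i => ?_)
    · exact (h_abs i).trans_le (norm_le_pi_norm x (π i))
    · rw [← π.apply_symm_apply i, ← h_abs]
      exact norm_le_pi_norm (fun i => ((ε i : SignType) : ℝ) * x (π i)) (π.symm i)

lemma signedPerm_apply (x : ι → ℝ) (i : ι) :
    signedPerm π ε x i = ((ε i : SignType) : ℝ) * x (π i) := rfl

lemma signedPerm_single [DecidableEq ι] (i : ι) (c : ℝ) :
    signedPerm π ε (Pi.single (π i) c) = Pi.single i (((ε i : SignType) : ℝ) * c) := by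
  ext j
  rw [signedPerm_apply]
  rcases eq_or_ne j i with rfl | hj
  · simp
  · simp [hj]

lemma measurePreserving_signedPerm (π : Equiv.Perm ι) (ε : ι → SignTypeˣ) :
    MeasurePreserving (signedPerm π ε) := by
  have h := (signedPerm π ε).toIsometryEquiv.measurePreserving_hausdorffMeasure (Fintype.card ι)
  rwa [hausdorffMeasure_pi_real] at h

lemma levelPattern_signedPerm (x : ι → ℝ) (s : ℝ) :
    levelPattern (signedPerm π ε x) s = permPattern π ε (levelPattern x s) := by
  funext i
  simp only [levelPattern, permPattern, signedPerm_apply, abs_mul, abs_coe_signUnit, one_mul,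
    sign_signUnit_mul, mul_ite, mul_zero]

lemma flagCoord_permPattern (p : ι → SignType) (x : ι → ℝ) :
    flagCoord (permPattern π ε p) (signedPerm π ε x) = flagCoord p x := by
  rcases eq_or_ne p 0 with rfl | hp
  · rw [permPattern_zero, flagCoord_zero_left, flagCoord_zero_left]
  have hp' : permPattern π ε p ≠ 0 := permPattern_zero (π := π) ▸ permPattern_injective.ne hp
  simp only [flagCoord_eq_volume hp, flagCoord_eq_volume hp', levelPattern_signedPerm,
    permPattern_injective.eq_iff]

lemma exists_permPattern_eq (h_card : #(signSupport p) = #(signSupport q)) {i j : ι}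
    (hi : p i ≠ 0) (hj : q j ≠ 0) :
    ∃ (π : Equiv.Perm ι) (ε : ι → SignTypeˣ),
      permPattern π ε p = q ∧ π j = i ∧ (ε j : SignType) = p i * q j := by
  classical
  let e : {i // i ∈ signSupport q} ≃ {i // i ∈ signSupport p} := equivOfCardEq h_card.symm
  have h_supp : ∀ k, p (e.extendSubtype k) = 0 ↔ q k = 0 := fun k => by
    by_cases hk : k ∈ signSupport q
    · exact iff_of_false (mem_signSupport.1 (e.extendSubtype_mem k hk)) (mem_signSupport.1 hk)
    · exact iff_of_true (not_not.1 (mem_signSupport.not.1 (e.extendSubtype_not_mem k hk)))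
        (not_not.1 (mem_signSupport.not.1 hk))
  let π := e.extendSubtype.trans (Equiv.swap (e.extendSubtype j) i)
  have hπj : π j = i := Equiv.swap_apply_left _ _
  have h_supp' : ∀ k, p (π k) = 0 ↔ q k = 0 := fun k => by
    rw [← h_supp]
    simp only [π, Equiv.trans_apply, Equiv.swap_apply_def]
    split_ifs with h1 h2
    · exact iff_of_false hi (h1 ▸ (h_supp j).not.2 hj)
    · exact iff_of_false ((h_supp j).not.2 hj) (h2 ▸ hi)
    · rfl
  refine ⟨π, fun k => transportSign (p (π k)) (q k), ?_, hπj, ?_⟩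
  · exact funext fun k => transportSign_mul (h_supp' k)
  · simp only [hπj, coe_transportSign hi hj]

/-- A set invariant under all permutations and sign changes of the coordinates. -/
def IsHyperoctahedral (B : Set (ι → ℝ)) : Prop :=
  ∀ (π : Equiv.Perm ι) (ε : ι → SignTypeˣ), signedPerm π ε ⁻¹' B = B

lemma isHyperoctahedral_closedBall (r : ℝ) :
    IsHyperoctahedral (Metric.closedBall (0 : ι → ℝ) r) := fun π ε => by
  rw [LinearIsometryEquiv.preimage_closedBall, map_zero]

end SignedPermutations

section MeanGradient

open Finset

variable {ι : Type*} [Fintype ι] {B : Set (ι → ℝ)} {f : (ι → ℝ) → ℝ} {C : NNReal}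
  {p q : ι → SignType}

/-- The mean of the derivative of `f` over `B`. -/
def meanGrad (B : Set (ι → ℝ)) (f : (ι → ℝ) → ℝ) : (ι → ℝ) →L[ℝ] ℝ := ⨍ x in B, fderiv ℝ f x

lemma norm_meanGrad_le (hf : LipschitzWith C f) : ‖meanGrad B f‖ ≤ C :=
  norm_average_le_of_norm_le C.2 fun _ => norm_fderiv_le_of_lipschitz ℝ hf

lemma integrableOn_fderiv (hf : LipschitzWith C f) (hB : volume B ≠ ⊤) :
    IntegrableOn (fderiv ℝ f) B :=
  Measure.integrableOn_of_bounded hB (measurable_fderiv ℝ f).aestronglyMeasurable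
    (.of_forall fun _ => norm_fderiv_le_of_lipschitz ℝ hf)

lemma meanGrad_apply (hf : LipschitzWith C f) (hB : volume B ≠ ⊤) (u : ι → ℝ) :
    meanGrad B f u = ⨍ x in B, fderiv ℝ f x u := by
  rw [meanGrad, setAverage_eq, setAverage_eq, smul_apply,
    ContinuousLinearMap.integral_apply (integrableOn_fderiv hf hB)]

lemma meanGrad_comp_signedPerm (hf : LipschitzWith C f) (hB : volume B ≠ ⊤)
    (hB_symm : IsHyperoctahedral B) (π : Equiv.Perm ι) (ε : ι → SignTypeˣ) (u : ι → ℝ) :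
    meanGrad B (f ∘ signedPerm π ε) u = meanGrad B f (signedPerm π ε u) := by
  have hf' : LipschitzWith (C * 1) (f ∘ signedPerm π ε) := hf.comp (signedPerm π ε).lipschitz
  have h_fderiv (x) : fderiv ℝ (f ∘ signedPerm π ε) x u
      = fderiv ℝ f (signedPerm π ε x) (signedPerm π ε u) :=
    DFunLike.congr_fun
      ((signedPerm π ε).toContinuousLinearEquiv.comp_right_fderiv (f := f) (x := x)) u
  rw [meanGrad_apply hf hB, meanGrad_apply hf' hB, setAverage_eq, setAverage_eq]
  simp_rw [h_fderiv]
  have h := (measurePreserving_signedPerm π ε).setIntegral_preimage_emb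
    (signedPerm π ε).toHomeomorph.measurableEmbedding
    (fun x => fderiv ℝ f x (signedPerm π ε u)) B
  rw [hB_symm] at h
  rw [← h]

/-- The reflection changing the sign of the coordinate `j`. -/
def coordFlip [DecidableEq ι] (j : ι) : (ι → ℝ) ≃ₗᵢ[ℝ] (ι → ℝ) :=
  signedPerm (Equiv.refl ι) (Pi.mulSingle j (-1))

lemma flagCoord_coordFlip [DecidableEq ι] {j : ι} (hj : p j = 0) (x : ι → ℝ) :
    flagCoord p (coordFlip j x) = flagCoord p x := by
  have h_fix : permPattern (Equiv.refl ι) (Pi.mulSingle j (-1)) p = p := by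
    funext i
    rcases eq_or_ne i j with rfl | hi
    · simp [permPattern, hj]
    · simp [permPattern, hi]
  conv_lhs => rw [← h_fix]
  exact flagCoord_permPattern p x

lemma meanGrad_single_eq_zero [DecidableEq ι] (hf : LipschitzWith C f) (hB : volume B ≠ ⊤)
    (hB_symm : IsHyperoctahedral B) {j : ι} (h : ∀ x, f (coordFlip j x) = f x) :
    meanGrad B f (Pi.single j 1) = 0 := by
  have h_comp : f ∘ coordFlip j = f := funext h
  have h_single : coordFlip j (Pi.single j (1 : ℝ)) = -Pi.single j 1 := by
    simpa [coordFlip, Pi.single_neg] using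
      signedPerm_single (π := Equiv.refl ι) (ε := Pi.mulSingle j (-1)) j 1
  have h_grad : meanGrad B (f ∘ coordFlip j) (Pi.single j 1)
      = meanGrad B f (coordFlip j (Pi.single j 1)) := meanGrad_comp_signedPerm hf hB hB_symm _ _ _
  rw [h_comp, h_single, map_neg] at h_grad
  linarith

lemma meanGrad_flagCoord_single [DecidableEq ι] (hB : volume B ≠ ⊤) (hB_symm : IsHyperoctahedral B)
    (h_card : #(signSupport p) = #(signSupport q)) {i j : ι} (hi : p i ≠ 0) (hj : q j ≠ 0) :
    p i * meanGrad B (flagCoord p) (Pi.single i 1)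
      = q j * meanGrad B (flagCoord q) (Pi.single j 1) := by
  obtain ⟨π, ε, rfl, rfl, hε⟩ := exists_permPattern_eq h_card hi hj
  have h_grad := meanGrad_comp_signedPerm (lipschitzWith_flagCoord (permPattern π ε p)) hB hB_symm
    π ε (Pi.single (π j) 1)
  have h_comp : flagCoord (permPattern π ε p) ∘ signedPerm π ε = flagCoord p :=
    funext (flagCoord_permPattern p)
  have h_smul : Pi.single j (((ε j : SignType) : ℝ) * 1)
      = ((ε j : SignType) : ℝ) • (Pi.single j 1 : ι → ℝ) := by
    rw [← Pi.single_smul, smul_eq_mul]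
  rw [h_comp, signedPerm_single, h_smul, map_smul, smul_eq_mul, hε, SignType.coe_mul] at h_grad
  rw [h_grad]
  linear_combination
    (permPattern π ε p j * meanGrad B (flagCoord (permPattern π ε p)) (Pi.single j 1))
      * coe_sign_mul_self hi

lemma clm_apply_eq_sum [DecidableEq ι] (L : (ι → ℝ) →L[ℝ] ℝ) (u : ι → ℝ) :
    L u = ∑ i, u i * L (Pi.single i 1) := by
  conv_lhs => rw [pi_eq_sum_univ' u]
  simp [map_sum]

lemma fderiv_apply_eq_one {E : Type*} [NormedAddCommGroup E] [NormedSpace ℝ E] {f : E → ℝ}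
    {x u : E} (hf : DifferentiableAt ℝ f x)
    (h : ∀ᶠ t in nhds (0 : ℝ), f (x + t • u) = f x + t) : fderiv ℝ f x u = 1 := by
  have h_line : HasDerivAt (fun t : ℝ => f (x + t • u)) (fderiv ℝ f x u) 0 :=
    hf.hasFDerivAt.hasLineDerivAt u
  exact h_line.unique (((hasDerivAt_id (0 : ℝ)).const_add (f x)).congr_of_eventuallyEq h)

lemma fderiv_flagCoord_signVec {x : ι → ℝ} (hx : DifferentiableAt ℝ (flagCoord p) x) :
    fderiv ℝ (flagCoord p) x (signVec p) = if 0 < flagCoord p x then 1 else 0 := by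
  split_ifs with h
  · refine fderiv_apply_eq_one hx ?_
    filter_upwards [lt_mem_nhds (neg_lt_zero.2 h)] with t ht
    exact flagCoord_add_smul_self h (by linarith)
  · have h_min : IsLocalMin (flagCoord p) x := .of_forall fun y =>
      (not_lt.1 h).trans (flagCoord_nonneg p y)
    rw [h_min.fderiv_eq_zero]; rfl

lemma ae_ne_zero_and_abs_injective :
    ∀ᵐ x : ι → ℝ, (∀ i, x i ≠ 0) ∧ (fun i => |x i|).Injective := by
  classical
  have h_functional : ∀ w : (ι → ℝ) →ₗ[ℝ] ℝ, w ≠ 0 → ∀ᵐ x : ι → ℝ, w x ≠ 0 := fun w hw => by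
    have h := Measure.addHaar_submodule (volume : Measure (ι → ℝ)) (LinearMap.ker w)
      (by rwa [Ne, LinearMap.ker_eq_top])
    rw [ae_iff]
    simpa [LinearMap.mem_ker] using! h
  have h_coord (i : ι) : ∀ᵐ x : ι → ℝ, x i ≠ 0 :=
    h_functional (LinearMap.proj i) fun h => by simpa using LinearMap.congr_fun h (Pi.single i 1)
  have h_sub (i j : ι) (hij : i ≠ j) : ∀ᵐ x : ι → ℝ, x i - x j ≠ 0 :=
    h_functional ((LinearMap.proj i : (ι → ℝ) →ₗ[ℝ] ℝ) - LinearMap.proj j) fun h => by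
      simpa [hij, hij.symm] using LinearMap.congr_fun h (Pi.single i 1)
  have h_add (i j : ι) (hij : i ≠ j) : ∀ᵐ x : ι → ℝ, x i + x j ≠ 0 :=
    h_functional ((LinearMap.proj i : (ι → ℝ) →ₗ[ℝ] ℝ) + LinearMap.proj j) fun h => by
      simpa [hij, hij.symm] using LinearMap.congr_fun h (Pi.single i 1)
  simp only [← ae_all_iff] at h_coord h_sub h_add
  filter_upwards [h_coord, h_sub, h_add] with x hx hx_sub hx_add
  refine ⟨hx, fun i j hij => by_contra fun hne => ?_⟩
  rcases abs_eq_abs.1 hij with h | h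
  · exact hx_sub i j hne (sub_eq_zero.2 h)
  · exact hx_add i j hne (by rw [h, neg_add_cancel])

variable [DecidableEq ι]

lemma sum_meanGrad_flagCoord_signVec (hB : volume B ≠ ⊤) (hB0 : volume B ≠ 0) {k : ℕ}
    (hk : 1 ≤ k) (hk' : k ≤ Fintype.card ι) :
    ∑ p : ι → SignType with #(signSupport p) = k, meanGrad B (flagCoord p) (signVec p) = 1 := by
  have h_diff : ∀ᵐ x, ∀ p : ι → SignType, DifferentiableAt ℝ (flagCoord p) x :=
    ae_all_iff.2 fun p => (lipschitzWith_flagCoord p).ae_differentiableAt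
  have h_sum : ∀ᵐ x, ∑ p : ι → SignType with #(signSupport p) = k,
      fderiv ℝ (flagCoord p) x (signVec p) = 1 := by
    filter_upwards [h_diff, ae_ne_zero_and_abs_injective] with x hx_diff hx
    obtain ⟨p, ⟨hp_card, hp_pos⟩, hp_unique⟩ :=
      existsUnique_card_signSupport_eq hx.1 hx.2 hk hk'
    simp_rw [fun p => fderiv_flagCoord_signVec (hx_diff p)]
    rw [sum_eq_single_of_mem p (by simpa using hp_card), if_pos hp_pos]
    intro q hq hqp
    exact if_neg fun hq_pos => hqp (hp_unique q ⟨by simpa using hq, hq_pos⟩)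
  have h_int (p : ι → SignType) : IntegrableOn (fun x => fderiv ℝ (flagCoord p) x (signVec p)) B :=
    (integrableOn_fderiv (lipschitzWith_flagCoord p) hB).apply_continuousLinearMap _
  simp_rw [fun p => meanGrad_apply (lipschitzWith_flagCoord p) hB (signVec p), setAverage_eq]
  rw [← smul_sum, ← integral_finsetSum _ fun p _ => h_int p, ← setAverage_eq,
    average_congr (ae_restrict_of_ae h_sum), setAverage_const hB0 hB]

/-- The inverse of the number of sign patterns with the same number of nonzero entries as `p`. -/
def flagWeight (p : ι → SignType) : ℝ :=
  (#{q : ι → SignType | #(signSupport q) = #(signSupport p)} : ℝ)⁻¹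

lemma flagWeight_nonneg (p : ι → SignType) : 0 ≤ flagWeight p := by
  unfold flagWeight; positivity

lemma one_le_card_filter_signSupport (p : ι → SignType) :
    1 ≤ #{q : ι → SignType | #(signSupport q) = #(signSupport p)} :=
  card_pos.2 ⟨p, by simp⟩

lemma flagWeight_le_one (p : ι → SignType) : flagWeight p ≤ 1 :=
  inv_le_one_of_one_le₀ (by exact_mod_cast one_le_card_filter_signSupport p)

-- By symmetry the mean gradient is a multiple of `signVec p`, with a factor depending only on the
-- size of the support. A generic `x` has exactly one level pattern of each size, which fixes it.
lemma meanGrad_flagCoord (hB : volume B ≠ ⊤) (hB0 : volume B ≠ 0) (hB_symm : IsHyperoctahedral B)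
    (p : ι → SignType) (u : ι → ℝ) :
    meanGrad B (flagCoord p) u = flagWeight p * (u ⬝ᵥ signVec p / #(signSupport p)) := by
  rcases eq_or_ne p 0 with rfl | hp
  · have h_const : flagCoord (0 : ι → SignType) = fun _ => 0 := funext flagCoord_zero_left
    simp [h_const, meanGrad, signVec_zero]
  obtain ⟨j, hj⟩ := Function.ne_iff.1 hp
  set c := p j * meanGrad B (flagCoord p) (Pi.single j 1) with hc
  have h_dir : ∀ q : ι → SignType, #(signSupport q) = #(signSupport p) → ∀ u,
      meanGrad B (flagCoord q) u = u ⬝ᵥ signVec q * c := fun q hq u => by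
    rw [clm_apply_eq_sum, dotProduct, sum_mul]
    refine sum_congr rfl fun i _ => ?_
    by_cases hi : q i = 0
    · rw [meanGrad_single_eq_zero (lipschitzWith_flagCoord q) hB hB_symm (flagCoord_coordFlip hi)]
      simp [signVec, hi]
    · rw [hc, ← meanGrad_flagCoord_single hB hB_symm hq hi hj, signVec]
      linear_combination -(u i * meanGrad B (flagCoord q) (Pi.single i 1)) * coe_sign_mul_self hi
  have h_total := sum_meanGrad_flagCoord_signVec hB hB0 (card_signSupport_pos hp)
    (card_le_univ (signSupport p))
  rw [sum_congr rfl fun q hq => h_dir q (mem_filter.1 hq).2 (signVec q)] at h_total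
  rw [sum_congr rfl fun q hq => by rw [signVec_dotProduct_self, (mem_filter.1 hq).2], sum_const,
    nsmul_eq_mul] at h_total
  have h_num : (0 : ℝ) < #{q : ι → SignType | #(signSupport q) = #(signSupport p)} := by
    exact_mod_cast one_le_card_filter_signSupport p
  have h_supp : (0 : ℝ) < #(signSupport p) := by exact_mod_cast card_signSupport_pos hp
  rw [h_dir p rfl, flagWeight]
  field_simp
  linear_combination (u ⬝ᵥ signVec p) * h_total

end MeanGradient

section FlagBump

open Finset Topology

variable {ι : Type*} [Fintype ι] {B : Set (ι → ℝ)} {f : (ι → ℝ) → ℝ} {r s : ι → SignType}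

/-- The overlap of two flag coordinates. Adding a multiple of it to a map that is linear on every
flag cone moves only the points whose flag contains both `r` and `s`. -/
def flagBump (r s : ι → SignType) (x : ι → ℝ) : ℝ := min (flagCoord r x) (flagCoord s x)

lemma flagBump_nonneg (r s : ι → SignType) (x : ι → ℝ) : 0 ≤ flagBump r s x :=
  le_min (flagCoord_nonneg r x) (flagCoord_nonneg s x)

lemma lipschitzWith_flagBump (r s : ι → SignType) : LipschitzWith 2 (flagBump r s) := by
  simpa only [max_self] using! (lipschitzWith_flagCoord r).min (lipschitzWith_flagCoord s)

lemma fderiv_apply_nonneg {E : Type*} [NormedAddCommGroup E] [NormedSpace ℝ E] {f : E → ℝ}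
    {x u : E} (hf : DifferentiableAt ℝ f x)
    (h : ∀ t : ℝ, 0 ≤ t → f x ≤ f (x + t • u)) : 0 ≤ fderiv ℝ f x u := by
  have h_line : HasDerivAt (fun t : ℝ => f (x + t • u)) (fderiv ℝ f x u) 0 :=
    hf.hasFDerivAt.hasLineDerivAt u
  refine ge_of_tendsto h_line.tendsto_slope_zero_right ?_
  filter_upwards [self_mem_nhdsWithin] with t ht
  have ht' : 0 < t := ht
  have := h t ht'.le
  simp only [zero_add, zero_smul, add_zero, smul_eq_mul]
  exact mul_nonneg (inv_nonneg.2 ht'.le) (sub_nonneg.2 this)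

lemma fderiv_flagBump_signVec_nonneg (h : IsSubpattern r s ∨ IsSubpattern s r) {x : ι → ℝ}
    (hx : DifferentiableAt ℝ (flagBump r s) x) : 0 ≤ fderiv ℝ (flagBump r s) x (signVec r) := by
  refine fderiv_apply_nonneg hx fun t ht =>
    min_le_min (flagCoord_le_add_smul_of_subpattern (.refl r) x ht) ?_
  rcases h with h | h
  · exact flagCoord_le_add_smul_of_superpattern h x ht
  · exact flagCoord_le_add_smul_of_subpattern h x ht

lemma fderiv_flagBump_signVec_eq_one {x : ι → ℝ} (hx : DifferentiableAt ℝ (flagBump r s) x)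
    (h_pos : 0 < flagCoord r x) (h_lt : flagCoord r x < flagCoord s x) :
    fderiv ℝ (flagBump r s) x (signVec r) = 1 := by
  refine fderiv_apply_eq_one hx ?_
  have h_cont : Continuous fun t : ℝ => x + t • signVec r := by fun_prop
  have h_open : ∀ᶠ t in 𝓝 (0 : ℝ),
      flagCoord r (x + t • signVec r) < flagCoord s (x + t • signVec r) :=
    ((continuous_flagCoord r).comp h_cont).continuousAt.eventually_lt
      ((continuous_flagCoord s).comp h_cont).continuousAt (by simpa using h_lt)
  filter_upwards [h_open, lt_mem_nhds (neg_lt_zero.2 h_pos)] with t ht ht'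
  rw [flagBump, flagBump, min_eq_left ht.le, min_eq_left h_lt.le]
  exact flagCoord_add_smul_self h_pos (by linarith)

lemma exists_pos_flagCoord_lt_of_mem_nhds_zero (hB : B ∈ 𝓝 0) (hr : r ≠ 0) (hs : s ≠ 0)
    (hrs : r ≠ s) (h : IsSubpattern r s ∨ IsSubpattern s r) :
    ∃ x ∈ interior B, 0 < flagCoord r x ∧ flagCoord r x < flagCoord s x := by
  have h_cont : Continuous fun t : ℝ => t • signVec r + (2 * t) • signVec s := by fun_prop
  have h_small : ∀ᶠ t in 𝓝 (0 : ℝ), t • signVec r + (2 * t) • signVec s ∈ interior B :=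
    h_cont.continuousAt.eventually_mem (by simpa using interior_mem_nhds.2 hB)
  obtain ⟨t, ht_mem, ht⟩ :=
    ((h_small.filter_mono nhdsWithin_le_nhds).and (self_mem_nhdsWithin (s := Set.Ioi 0))).exists
  have ht : 0 < t := ht
  refine ⟨_, ht_mem, ?_⟩
  rcases h with h | h
  · rw [flagCoord_add_left_of_isSubpattern h hrs hr ht.le (by positivity),
      flagCoord_add_right_of_isSubpattern h hrs ht.le (by positivity)]
    exact ⟨ht, by linarith⟩
  · rw [add_comm, flagCoord_add_left_of_isSubpattern h hrs.symm hs (by positivity) ht.le,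
      flagCoord_add_right_of_isSubpattern h hrs.symm (by positivity) ht.le]
    exact ⟨ht, by linarith⟩

lemma meanGrad_flagBump_pos (hB : B ∈ 𝓝 0) (hB_fin : volume B ≠ ⊤) (hr : r ≠ 0) (hs : s ≠ 0)
    (hrs : r ≠ s) (h : IsSubpattern r s ∨ IsSubpattern s r) :
    0 < meanGrad B (flagBump r s) (signVec r) := by
  set U : Set (ι → ℝ) := {x | 0 < flagCoord r x} ∩ {x | flagCoord r x < flagCoord s x}
  have hU_open : IsOpen U := (isOpen_lt continuous_const (continuous_flagCoord r)).inter
    (isOpen_lt (continuous_flagCoord r) (continuous_flagCoord s))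
  obtain ⟨x, hxB, hxU⟩ := exists_pos_flagCoord_lt_of_mem_nhds_zero hB hr hs hrs h
  have hBU : 0 < volume (B ∩ U) :=
    ((isOpen_interior.inter hU_open).measure_pos volume ⟨x, hxB, hxU⟩).trans_le
      (measure_mono (Set.inter_subset_inter_left _ interior_subset))
  rw [meanGrad_apply (lipschitzWith_flagBump r s) hB_fin, setAverage_eq, smul_eq_mul]
  refine mul_pos (inv_pos.2 (ENNReal.toReal_pos
    (hBU.trans_le (measure_mono Set.inter_subset_left)).ne' hB_fin)) ?_
  have h_diff : ∀ᵐ x ∂volume.restrict B, DifferentiableAt ℝ (flagBump r s) x :=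
    ae_restrict_of_ae (lipschitzWith_flagBump r s).ae_differentiableAt
  rw [integral_pos_iff_support_of_nonneg_ae
    (h_diff.mono fun y hy => fderiv_flagBump_signVec_nonneg h hy)
    ((integrableOn_fderiv (lipschitzWith_flagBump r s) hB_fin).apply_continuousLinearMap _)]
  have h_restrict : 0 < volume.restrict B U := by
    rwa [Measure.restrict_apply hU_open.measurableSet, Set.inter_comm]
  refine h_restrict.trans_le (measure_mono_ae ?_)
  filter_upwards [h_diff] with y hy hyU
  exact (fderiv_flagBump_signVec_eq_one hy hyU.1 hyU.2).trans_ne one_ne_zero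

lemma exists_pos_le_meanGrad_flagBump (hB : B ∈ 𝓝 0) (hB_fin : volume B ≠ ⊤) :
    ∃ κ > 0, ∀ r s : ι → SignType, r ≠ 0 → s ≠ 0 → r ≠ s → IsSubpattern r s ∨ IsSubpattern s r →
      κ ≤ meanGrad B (flagBump r s) (signVec r) := by
  have h_small : ∀ᶠ κ in 𝓝[>] (0 : ℝ), ∀ r s : ι → SignType, r ≠ 0 → s ≠ 0 → r ≠ s →
      IsSubpattern r s ∨ IsSubpattern s r → κ ≤ meanGrad B (flagBump r s) (signVec r) := by
    simp only [Filter.eventually_all]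
    intro r s hr hs hrs h
    exact ((eventually_lt_nhds (meanGrad_flagBump_pos hB hB_fin hr hs hrs h)).mono
      fun _ => le_of_lt).filter_mono nhdsWithin_le_nhds
  obtain ⟨κ, hκ, hκ_pos⟩ := (h_small.and self_mem_nhdsWithin).exists
  exact ⟨κ, hκ_pos, hκ⟩

lemma abs_meanGrad_flagBump_le (hB : volume B ≠ ⊤) (hB_symm : IsHyperoctahedral B) {c : ℝ}
    (hc : 0 ≤ c) {u : ι → ℝ} (hu : ∀ i, r i ≠ 0 ∨ s i ≠ 0 → |u i| ≤ c) :
    |meanGrad B (flagBump r s) u| ≤ 2 * c := by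
  classical
  set u' : ι → ℝ := fun i => if r i ≠ 0 ∨ s i ≠ 0 then u i else 0 with hu'
  have h_eq : meanGrad B (flagBump r s) u = meanGrad B (flagBump r s) u' := by
    rw [clm_apply_eq_sum _ u, clm_apply_eq_sum _ u']
    refine sum_congr rfl fun i _ => ?_
    by_cases hi : r i ≠ 0 ∨ s i ≠ 0
    · simp only [hu', if_pos hi]
    · obtain ⟨hri, hsi⟩ : r i = 0 ∧ s i = 0 := by simpa only [not_or, not_not] using hi
      rw [meanGrad_single_eq_zero (lipschitzWith_flagBump r s) hB hB_symm fun x => by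
        rw [flagBump, flagBump, flagCoord_coordFlip hri, flagCoord_coordFlip hsi],
        mul_zero, mul_zero]
  have h_norm : ‖u'‖ ≤ c := (pi_norm_le_iff_of_nonneg hc).2 fun i => by
    by_cases hi : r i ≠ 0 ∨ s i ≠ 0
    · simpa [hu', hi] using hu i hi
    · simpa [hu', hi] using hc
  rw [h_eq]
  exact (ContinuousLinearMap.le_of_opNorm_le _
    (norm_meanGrad_le (lipschitzWith_flagBump r s)) u').trans
      (mul_le_mul_of_nonneg_left h_norm zero_le_two)

end FlagBump

section FlagField

open Finset

variable {ι κ : Type*} [Fintype ι] [Fintype κ] {B : Set (ι → ℝ)} {f : κ → (ι → ℝ) → ℝ} {C : NNReal}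

lemma lipschitzWith_sum_smul (hf : ∀ k, LipschitzWith C (f k)) (u : κ → ι → ℝ) :
    LipschitzWith (C * ∑ k, ‖u k‖₊) (fun x => ∑ k, f k x • u k) := by
  refine LipschitzWith.of_dist_le_mul fun x y => ?_
  rw [dist_eq_norm, ← sum_sub_distrib]
  push_cast
  rw [mul_sum, sum_mul]
  refine norm_sum_le_of_le _ fun k _ => ?_
  rw [← sub_smul, norm_smul, ← dist_eq_norm]
  calc dist (f k x) (f k y) * ‖u k‖ ≤ C * dist x y * ‖u k‖ := by
        gcongr; exact (hf k).dist_le_mul x y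
    _ = C * ‖u k‖ * dist x y := by ring

lemma meanDiv_sum_smul (hB : volume B ≠ ⊤) (hf : ∀ k, LipschitzWith C (f k)) (u : κ → ι → ℝ) :
    meanDiv B (fun x => ∑ k, f k x • u k) = ∑ k, meanGrad B (f k) (u k) := by
  have h_diff : ∀ᵐ x, ∀ k, DifferentiableAt ℝ (f k) x :=
    ae_all_iff.2 fun k => (hf k).ae_differentiableAt
  have h_div : ∀ᵐ x, divergence (fun x => ∑ k, f k x • u k) x = ∑ k, fderiv ℝ (f k) x (u k) := by
    filter_upwards [h_diff] with x hx
    have h := HasFDerivAt.fun_sum fun k (_ : k ∈ univ) => (hx k).hasFDerivAt.smul_const (u k)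
    rw [divergence, h.fderiv, ContinuousLinearMap.toLinearMap_sum, map_sum]
    exact sum_congr rfl fun k _ => LinearMap.trace_smulRight _ _
  rw [meanDiv, average_congr (ae_restrict_of_ae h_div), setAverage_eq,
    integral_finsetSum _ fun k _ => (integrableOn_fderiv (hf k) hB).apply_continuousLinearMap _,
    smul_sum]
  exact sum_congr rfl fun k _ => by rw [meanGrad_apply (hf k) hB, setAverage_eq]

lemma lipschitzWith_optionElim_flagCoord (r s : ι → SignType) (k : Option (ι → SignType)) :
    LipschitzWith 2 (k.elim (flagBump r s) flagCoord) := by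
  cases k
  · exact lipschitzWith_flagBump r s
  · exact lipschitzWith_flagCoord _

variable [DecidableEq ι] {U : (ι → SignType) → ι → ℝ} {r s : ι → SignType} {w : ι → ℝ}

/-- The displacement `∑ p, flagCoord p x • U p` which moves each cone generator `signVec p` by
`U p`, corrected by a bump in the direction `w`. -/
def flagField (U : (ι → SignType) → ι → ℝ) (r s : ι → SignType) (w x : ι → ℝ) : ι → ℝ :=
  ∑ p, flagCoord p x • U p + flagBump r s x • w

lemma flagField_eq_sum_option (U : (ι → SignType) → ι → ℝ) (r s : ι → SignType) (w x : ι → ℝ) :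
    flagField U r s w x
      = ∑ k : Option (ι → SignType), k.elim (flagBump r s) flagCoord x • k.elim w U := by
  rw [Fintype.sum_option, add_comm]
  rfl

lemma lipschitzWith_flagField {η₁ η₂ : NNReal} (hU : ∀ p, ‖U p‖ ≤ η₁) (hw : ‖w‖ ≤ η₂) :
    LipschitzWith (2 * (Fintype.card (ι → SignType) * η₁ + η₂)) (flagField U r s w) := by
  have h := lipschitzWith_sum_smul (lipschitzWith_optionElim_flagCoord r s) (fun k => k.elim w U)
  rw [funext (flagField_eq_sum_option U r s w)]
  refine h.weaken (mul_le_mul_right ?_ 2)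
  rw [Fintype.sum_option, add_comm]
  refine add_le_add ?_ hw
  simpa using sum_le_card_nsmul univ (fun p => ‖U p‖₊) η₁ fun p _ => hU p

lemma meanDiv_flagField (hB : volume B ≠ ⊤) (hB0 : volume B ≠ 0) (hB_symm : IsHyperoctahedral B) :
    meanDiv B (flagField U r s w)
      = ∑ p, flagWeight p * (U p ⬝ᵥ signVec p / #(signSupport p))
        + meanGrad B (flagBump r s) w := by
  rw [funext (flagField_eq_sum_option U r s w),
    meanDiv_sum_smul hB (lipschitzWith_optionElim_flagCoord r s), Fintype.sum_option, add_comm]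
  congr 1
  exact sum_congr rfl fun p _ => meanGrad_flagCoord hB hB0 hB_symm p (U p)

end FlagField

section CrossPolytope

open Topology

/-- The unit ball of the `ℓ¹` norm. -/
def crossPolytope (ι : Type*) [Fintype ι] : Set (ι → ℝ) := {x | ∑ i, |x i| ≤ 1}

variable {ι : Type*} [Fintype ι]

lemma isClosed_crossPolytope : IsClosed (crossPolytope ι) :=
  isClosed_le (by fun_prop) continuous_const

lemma crossPolytope_mem_nhds_zero : crossPolytope ι ∈ 𝓝 0 := by
  have h_cont : Continuous fun x : ι → ℝ => ∑ i, |x i| := by fun_prop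
  exact Filter.mem_of_superset ((isOpen_lt h_cont continuous_const).mem_nhds
    (show ∑ i, |(0 : ι → ℝ) i| < 1 by simp)) fun x (hx : ∑ i, |x i| < 1) => hx.le

lemma isHyperoctahedral_crossPolytope : IsHyperoctahedral (crossPolytope ι) := fun π ε => by
  ext x
  simp only [crossPolytope, Set.mem_preimage, Set.mem_ofPred_eq, signedPerm_apply, abs_mul,
    abs_coe_signUnit, one_mul, Equiv.sum_comp π (fun i => |x i|)]

lemma volume_crossPolytope [Nonempty ι] :
    volume (crossPolytope ι)
      = ENNReal.ofReal (2 ^ Fintype.card ι / (Fintype.card ι).factorial) := by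
  have h := volume_sum_rpow_le (ι := ι) (p := 1) le_rfl 1
  have h_Gamma : Real.Gamma (1 + 1) = 1 := by simpa using Real.Gamma_nat_eq_factorial 1
  simpa only [Real.rpow_one, div_one, ENNReal.ofReal_one, one_pow, one_mul,
    Real.Gamma_nat_eq_factorial, h_Gamma, mul_one] using! h

lemma volume_crossPolytope_ne_top [Nonempty ι] : volume (crossPolytope ι) ≠ ⊤ := by
  rw [volume_crossPolytope]
  exact ENNReal.ofReal_ne_top

lemma volume_closedBall_mul_volume_crossPolytope [Nonempty ι] :
    volume (Metric.closedBall (0 : ι → ℝ) 1) * volume (crossPolytope ι)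
      = 4 ^ Fintype.card ι / (Fintype.card ι).factorial := by
  rw [volume_crossPolytope, Real.volume_pi_closedBall 0 zero_le_one,
    ENNReal.ofReal_div_of_pos (by positivity), ← mul_div_assoc,
    ← ENNReal.ofReal_mul (by positivity), ← mul_pow, ENNReal.ofReal_pow (by norm_num),
    ENNReal.ofReal_natCast]
  norm_num

end CrossPolytope

section DotPolar

variable {ι : Type*} [Fintype ι] {K : Set (ι → ℝ)} {x y : ι → ℝ}

/-- The polar body with respect to the coordinate pairing `⬝ᵥ`. -/
def dotPolar (K : Set (ι → ℝ)) : Set (ι → ℝ) := {y | ∀ x ∈ K, x ⬝ᵥ y ≤ 1}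

lemma abs_dotProduct_le (x y : ι → ℝ) : |x ⬝ᵥ y| ≤ ‖x‖ * ∑ i, |y i| := by
  rw [dotProduct, Finset.mul_sum]
  refine Finset.abs_sum_le_sum_abs _ _ |>.trans (Finset.sum_le_sum fun i _ => ?_)
  rw [abs_mul]
  exact mul_le_mul_of_nonneg_right (norm_le_pi_norm x i) (abs_nonneg _)

lemma isClosed_dotPolar (K : Set (ι → ℝ)) : IsClosed (dotPolar K) := by
  simp only [dotPolar, Set.ofPred_forall]
  refine isClosed_iInter fun x => isClosed_iInter fun _ => isClosed_le ?_ continuous_const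
  unfold dotProduct
  fun_prop

lemma convex_dotPolar (K : Set (ι → ℝ)) : Convex ℝ (dotPolar K) :=
  fun y hy z hz a b ha hb hab x hx => by
    rw [dotProduct_add, dotProduct_smul, dotProduct_smul, smul_eq_mul, smul_eq_mul]
    linarith [mul_le_mul_of_nonneg_left (hy x hx) ha, mul_le_mul_of_nonneg_left (hz x hx) hb]

lemma zero_mem_dotPolar (K : Set (ι → ℝ)) : 0 ∈ dotPolar K := fun x _ => by
  simp only [dotProduct_zero, zero_le_one]

lemma mem_of_forall_dotPolar_le_one (hK : Convex ℝ K) (hK_closed : IsClosed K) (hK_zero : 0 ∈ K)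
    (hx : ∀ y ∈ dotPolar K, x ⬝ᵥ y ≤ 1) : x ∈ K := by
  classical
  by_contra hxK
  obtain ⟨f, u, hf_lt, hu_lt⟩ := geometric_hahn_banach_closed_point hK hK_closed hxK
  have hu : 0 < u := by simpa using hf_lt 0 hK_zero
  have h_pairing (z : ι → ℝ) : z ⬝ᵥ (fun i => f (Pi.single i 1) / u) = f z / u := by
    simp only [clm_apply_eq_sum f z, dotProduct, Finset.sum_div, mul_div_assoc]
  have h_le := hx (fun i => f (Pi.single i 1) / u) fun z hz => by
    rw [h_pairing, div_le_one₀ hu]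
    exact (hf_lt z hz).le
  rw [h_pairing, div_le_one₀ hu] at h_le
  exact h_le.not_gt hu_lt

end DotPolar

section CubePosition

lemma signVec_single {ι : Type*} [DecidableEq ι] (i : ι) (a : SignType) :
    signVec (Pi.single i a) = Pi.single i (a : ℝ) := by
  ext j
  rcases eq_or_ne j i with rfl | hj
  · simp [signVec]
  · simp [signVec, hj]

variable {ι : Type*} [Fintype ι] [DecidableEq ι] {K : Set (ι → ℝ)} {δ : ℝ} {x y : ι → ℝ}

/-- A symmetric convex body between the cross-polytope and the cube whose polar lies in
`(1 + δ)` times the cross-polytope. -/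
structure IsCubePosition (K : Set (ι → ℝ)) (δ : ℝ) : Prop where
  convex : Convex ℝ K
  isClosed : IsClosed K
  neg_mem : ∀ x ∈ K, -x ∈ K
  norm_le_one : ∀ x ∈ K, ‖x‖ ≤ 1
  single_mem : ∀ i, Pi.single i 1 ∈ K
  sum_abs_le : ∀ y ∈ dotPolar K, ∑ i, |y i| ≤ 1 + δ

namespace IsCubePosition

lemma crossPolytope_subset_dotPolar (h : IsCubePosition K δ) : crossPolytope ι ⊆ dotPolar K :=
  fun y hy x hx => calc
    x ⬝ᵥ y ≤ ‖x‖ * ∑ i, |y i| := (le_abs_self _).trans (abs_dotProduct_le x y)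
    _ ≤ 1 * 1 := mul_le_mul (h.norm_le_one x hx) hy (by positivity) zero_le_one
    _ = 1 := one_mul 1

lemma zero_mem [Nonempty ι] (h : IsCubePosition K δ) : 0 ∈ K := by
  obtain ⟨i⟩ := ‹Nonempty ι›
  simpa using h.convex.midpoint_mem (h.single_mem i) (h.neg_mem _ (h.single_mem i))

lemma nonneg [Nonempty ι] (h : IsCubePosition K δ) : 0 ≤ δ := by
  obtain ⟨i⟩ := ‹Nonempty ι›
  have h_sum : ∑ j, |Pi.single i (1 : ℝ) j| = 1 := by simp [Pi.single_apply, apply_ite abs]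
  linarith [h.sum_abs_le _ (h.crossPolytope_subset_dotPolar h_sum.le)]

lemma abs_dotPolar_le_one (h : IsCubePosition K δ) (hy : y ∈ dotPolar K) (i : ι) : |y i| ≤ 1 := by
  have h_pos := hy _ (h.single_mem i)
  have h_neg := hy _ (h.neg_mem _ (h.single_mem i))
  rw [neg_dotProduct, single_dotProduct, one_mul] at h_neg
  rw [single_dotProduct, one_mul] at h_pos
  exact abs_le.2 ⟨by linarith, h_pos⟩

lemma isCompact_dotPolar (h : IsCubePosition K δ) : IsCompact (dotPolar K) := by
  refine Metric.isCompact_of_isClosed_isBounded (isClosed_dotPolar K)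
    (Metric.isBounded_closedBall (x := 0) (r := 1) |>.subset fun y hy => ?_)
  rw [mem_closedBall_zero_iff]
  exact (pi_norm_le_iff_of_nonneg zero_le_one).2 (h.abs_dotPolar_le_one hy)

lemma signVec_single_mem [Nonempty ι] (h : IsCubePosition K δ) (i : ι) (a : SignType) :
    signVec (Pi.single i a) ∈ K := by
  rw [signVec_single]
  cases a
  · simpa using h.zero_mem
  · simpa [Pi.single_neg] using h.neg_mem _ (h.single_mem i)
  · simpa using h.single_mem i

lemma smul_signVec_mem_dotPolar (h : IsCubePosition K δ) (p : ι → SignType) :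
    (Finset.card (signSupport p) : ℝ)⁻¹ • signVec p ∈ dotPolar K := by
  refine h.crossPolytope_subset_dotPolar ?_
  simp only [crossPolytope, Set.mem_ofPred_eq, Pi.smul_apply, smul_eq_mul, abs_mul,
    ← Finset.mul_sum, sum_abs_signVec]
  rw [abs_of_nonneg (by positivity)]
  exact inv_mul_le_one

end IsCubePosition

end CubePosition

section DualPairs

open Finset Topology

lemma abs_coe_sign {a : SignType} (ha : a ≠ 0) : |(a : ℝ)| = 1 := by
  cases a <;> simp_all

lemma sum_nonpos_of_eventually_prod_one_add_le {κ : Type*} {s : Finset κ} {a : κ → ℝ}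
    (h : ∀ᶠ t in 𝓝[>] (0 : ℝ), ∏ i ∈ s, (1 + t * a i) ≤ 1) : ∑ i ∈ s, a i ≤ 0 := by
  classical
  have h_deriv : HasDerivAt (fun t : ℝ => ∏ i ∈ s, (1 + t * a i)) (∑ i ∈ s, a i) 0 := by
    simpa using HasDerivAt.fun_finsetProd fun i (_ : i ∈ s) =>
      ((hasDerivAt_id (0 : ℝ)).mul_const (a i)).const_add 1
  refine le_of_tendsto h_deriv.tendsto_slope_zero_right ?_
  filter_upwards [h, self_mem_nhdsWithin] with t ht ht_pos
  have ht_pos : 0 < t := ht_pos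
  simp only [zero_add, zero_mul, add_zero, prod_const_one, smul_eq_mul]
  exact mul_nonpos_of_nonneg_of_nonpos (inv_nonneg.2 ht_pos.le) (sub_nonpos.2 ht)

variable {ι : Type*} [Fintype ι] {K L : Set (ι → ℝ)} {δ : ℝ} {p : ι → SignType} {y z : ι → ℝ}

lemma sum_div_le_card_of_isMaxOn (hL : Convex ℝ L) (hy : y ∈ L) (hz : z ∈ L)
    (hy_pos : ∀ i, p i ≠ 0 → 0 < p i * y i)
    (hy_max : IsMaxOn (fun y : ι → ℝ => ∏ i ∈ signSupport p, (p i : ℝ) * y i)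
      (L ∩ {y | ∀ i, 0 ≤ p i * y i}) y) :
    ∑ i ∈ signSupport p, z i / y i ≤ #(signSupport p) := by
  have hy_ne : ∀ i, p i ≠ 0 → y i ≠ 0 := fun i hi h0 => by simpa [h0] using hy_pos i hi
  suffices h : ∑ i ∈ signSupport p, (z i / y i - 1) ≤ 0 by simpa using h
  refine sum_nonpos_of_eventually_prod_one_add_le ?_
  have h_pos : ∀ᶠ t in 𝓝[>] (0 : ℝ), ∀ i, 0 < 1 + t * (z i / y i - 1) := by
    refine Filter.eventually_all.2 fun i => nhdsWithin_le_nhds ?_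
    exact (isOpen_lt continuous_const (by fun_prop)).mem_nhds (by simp)
  filter_upwards [h_pos, Ioo_mem_nhdsGT one_pos] with t ht_pos ⟨ht0, ht1⟩
  have h_factor : ∀ i, p i ≠ 0 → p i * ((1 - t) • y + t • z) i
      = p i * y i * (1 + t * (z i / y i - 1)) := fun i hi => by
    simp only [Pi.add_apply, Pi.smul_apply, smul_eq_mul]
    linear_combination (-(p i * t)) * mul_div_cancel₀ (z i) (hy_ne i hi)
  have h_mem : (1 - t) • y + t • z ∈ L ∩ {y | ∀ i, 0 ≤ p i * y i} := by
    refine ⟨hL hy hz (by linarith) ht0.le (by ring), fun i => ?_⟩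
    by_cases hi : p i = 0
    · simp [hi]
    · rw [h_factor i hi]
      exact mul_nonneg (hy_pos i hi).le (ht_pos i).le
  have h_prod : 0 < ∏ i ∈ signSupport p, p i * y i :=
    prod_pos fun i hi => hy_pos i (mem_signSupport.1 hi)
  have h_le := hy_max h_mem
  simp only [Set.mem_ofPred_eq] at h_le
  rw [prod_congr rfl fun i hi => h_factor i (mem_signSupport.1 hi), prod_mul_distrib] at h_le
  exact (mul_le_iff_le_one_right h_prod).1 h_le

/-- Lozanovskii's factorisation of the functional `signVec p`. -/
lemma exists_forall_sum_div_le_card (hL : Convex ℝ L) (hL_compact : IsCompact L)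
    (hy : y ∈ L) (hy_nonneg : ∀ i, 0 ≤ p i * y i) (hy_pos : ∀ i, p i ≠ 0 → 0 < p i * y i) :
    ∃ y ∈ L, (∀ i, p i ≠ 0 → 0 < p i * y i) ∧
      ∀ z ∈ L, ∑ i ∈ signSupport p, z i / y i ≤ #(signSupport p) := by
  have h_compact : IsCompact (L ∩ {y | ∀ i, 0 ≤ p i * y i}) := by
    refine hL_compact.inter_right ?_
    simp only [Set.ofPred_forall]
    exact isClosed_iInter fun i => isClosed_le continuous_const (by fun_prop)
  obtain ⟨y', ⟨hy'L, hy'_nonneg⟩, hy'_max⟩ := h_compact.exists_isMaxOn ⟨y, hy, hy_nonneg⟩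
    (f := fun y : ι → ℝ => ∏ i ∈ signSupport p, (p i : ℝ) * y i) (by fun_prop)
  have h_prod : 0 < ∏ i ∈ signSupport p, p i * y' i :=
    (prod_pos fun i hi => hy_pos i (mem_signSupport.1 hi)).trans_le (hy'_max ⟨hy, hy_nonneg⟩)
  have hy'_pos : ∀ i, p i ≠ 0 → 0 < p i * y' i := fun i hi =>
    (hy'_nonneg i).lt_of_ne' (prod_ne_zero_iff.1 h_prod.ne' i (mem_signSupport.2 hi))
  exact ⟨y', hy'L, hy'_pos, fun z hz => sum_div_le_card_of_isMaxOn hL hy'L hz hy'_pos hy'_max⟩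

/-- The dual of `y` on the face of `p`: its pairing with `y` is spread evenly over the support. -/
def supportInv (p : ι → SignType) (y : ι → ℝ) (i : ι) : ℝ :=
  if p i = 0 then 0 else (#(signSupport p) * y i)⁻¹

lemma supportInv_dotProduct (y z : ι → ℝ) :
    supportInv p y ⬝ᵥ z = (∑ i ∈ signSupport p, z i / y i) / #(signSupport p) := by
  rw [signSupport, sum_filter, sum_div]
  refine sum_congr rfl fun i _ => ?_
  by_cases hi : p i = 0
  · simp [supportInv, hi]
  · simp only [supportInv, hi, if_false, ne_eq, not_false_eq_true, if_true, signSupport, mul_inv]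
    ring

lemma supportInv_dotProduct_self (hp : p ≠ 0) (hy : ∀ i, p i ≠ 0 → y i ≠ 0) :
    supportInv p y ⬝ᵥ y = 1 := by
  have h_card : (#(signSupport p) : ℝ) ≠ 0 := by exact_mod_cast (card_signSupport_pos hp).ne'
  rw [supportInv_dotProduct, sum_congr rfl fun i hi => div_self (hy i (mem_signSupport.1 hi)),
    sum_const, nsmul_one, div_self h_card]

lemma inv_card_le_mul_of_abs_supportInv_le_one {i : ι} (hi : p i ≠ 0) (hy : 0 < p i * y i)
    (h : |supportInv p y i| ≤ 1) : (#(signSupport p) : ℝ)⁻¹ ≤ p i * y i := by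
  have h_card : (0 : ℝ) < #(signSupport p) := by
    exact_mod_cast card_pos.2 ⟨i, mem_signSupport.2 hi⟩
  have h_abs : |y i| = p i * y i := by
    rw [← abs_of_pos hy, abs_mul, abs_coe_sign hi, one_mul]
  rw [supportInv, if_neg hi, abs_inv, abs_mul, abs_of_pos h_card, h_abs] at h
  rw [inv_le_iff_one_le_mul₀' h_card]
  exact (inv_le_one₀ (by positivity)).1 h

lemma norm_sub_smul_signVec_le (hp : p ≠ 0) (hδ : 0 ≤ δ) (hy_sum : ∑ i, |y i| ≤ 1 + δ)
    (hy : ∀ i, p i ≠ 0 → (#(signSupport p) : ℝ)⁻¹ ≤ p i * y i) :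
    ‖y - (#(signSupport p) : ℝ)⁻¹ • signVec p‖ ≤ δ := by
  set k := (#(signSupport p) : ℝ) with hk
  have hk_pos : 0 < k := by rw [hk]; exact_mod_cast card_signSupport_pos hp
  have h_abs (i) : |(y - k⁻¹ • signVec p) i| = |y i| - k⁻¹ * |signVec p i| := by
    simp only [Pi.sub_apply, Pi.smul_apply, smul_eq_mul, signVec]
    by_cases hi : p i = 0
    · simp [hi]
    · have h_factor : y i - k⁻¹ * p i = p i * (p i * y i - k⁻¹) := by
        linear_combination (-y i) * coe_sign_mul_self hi
      have h_pos : 0 ≤ p i * y i := (inv_nonneg.2 hk_pos.le).trans (hy i hi)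
      rw [h_factor, abs_mul, abs_coe_sign hi, one_mul, abs_of_nonneg (sub_nonneg.2 (hy i hi)),
        ← abs_of_nonneg h_pos, abs_mul, abs_coe_sign hi, one_mul, mul_one]
  have h_sum : ∑ i, |(y - k⁻¹ • signVec p) i| ≤ δ := by
    simp_rw [h_abs]
    rw [sum_sub_distrib, ← mul_sum, sum_abs_signVec, ← hk, inv_mul_cancel₀ hk_pos.ne']
    linarith
  refine (pi_norm_le_iff_of_nonneg hδ).2 fun i => ?_
  exact (single_le_sum (f := fun i => |(y - k⁻¹ • signVec p) i|) (fun i _ => abs_nonneg _)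
    (mem_univ i)).trans h_sum

lemma norm_supportInv_sub_signVec_le (hy_norm : ‖y - (#(signSupport p) : ℝ)⁻¹ • signVec p‖ ≤ δ)
    (hy : ∀ i, p i ≠ 0 → (#(signSupport p) : ℝ)⁻¹ ≤ p i * y i) :
    ‖supportInv p y - signVec p‖ ≤ Fintype.card ι * δ := by
  have hδ : 0 ≤ δ := (norm_nonneg _).trans hy_norm
  refine (pi_norm_le_iff_of_nonneg (by positivity)).2 fun i => ?_
  by_cases hi : p i = 0
  · simpa [supportInv, signVec, hi] using mul_nonneg (Nat.cast_nonneg _) hδ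
  set k := (#(signSupport p) : ℝ) with hk
  have hk_pos : 0 < k := by rw [hk]; exact_mod_cast card_pos.2 ⟨i, mem_signSupport.2 hi⟩
  have hk_le : k ≤ Fintype.card ι := by rw [hk]; exact_mod_cast card_le_univ _
  have hu : 1 ≤ k * (p i * y i) := (inv_le_iff_one_le_mul₀' hk_pos).1 (hy i hi)
  have hy_ne : y i ≠ 0 := fun h0 => by norm_num [h0] at hu
  have h_factor : supportInv p y i - p i
      = -(k * (y i - k⁻¹ * p i)) * (k * (p i * y i))⁻¹ := by
    have hp_ne : (p i : ℝ) ≠ 0 := left_ne_zero_of_mul_eq_one (coe_sign_mul_self hi)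
    rw [supportInv, if_neg hi, ← hk]
    field_simp
    linear_combination (-(k * y i)) * coe_sign_mul_self hi
  have h_coord : |y i - k⁻¹ * p i| ≤ δ := (norm_le_pi_norm _ i).trans hy_norm
  rw [Real.norm_eq_abs, Pi.sub_apply, signVec, h_factor, abs_mul, abs_neg, abs_mul,
    abs_of_pos hk_pos, abs_inv, abs_of_pos (zero_lt_one.trans_le hu)]
  calc k * |y i - k⁻¹ * p i| * (k * (p i * y i))⁻¹ ≤ Fintype.card ι * δ * 1 := by
        gcongr
        exact inv_le_one_of_one_le₀ hu
    _ = Fintype.card ι * δ := mul_one _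

/-- A point `x` of `K` and a support functional `y` of `K` at `x`, close to the vertex `signVec p`
of the cube and to its barycentric functional. For `p = 0` there is no duality to ask for. -/
structure IsDualPair (K : Set (ι → ℝ)) (δ : ℝ) (p : ι → SignType) (x y : ι → ℝ) : Prop where
  mem : x ∈ K
  mem_dotPolar : y ∈ dotPolar K
  dotProduct_eq_one : p ≠ 0 → x ⬝ᵥ y = 1
  norm_sub_signVec_le : ‖x - signVec p‖ ≤ Fintype.card ι * δ
  norm_sub_smul_signVec_le : ‖y - (#(signSupport p) : ℝ)⁻¹ • signVec p‖ ≤ δ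

variable [DecidableEq ι]

lemma card_signSupport_single (i : ι) {a : SignType} (ha : a ≠ 0) :
    #(signSupport (Pi.single i a : ι → SignType)) = 1 := by
  have h_supp : signSupport (Pi.single i a : ι → SignType) = {i} := by
    ext j
    rcases eq_or_ne j i with rfl | hj
    · simp [mem_signSupport, ha]
    · simp [mem_signSupport, hj]
  rw [h_supp, card_singleton]

/-- A choice of dual pairs for all patterns which is exact at the coordinate directions. -/
structure IsDualFamily (K : Set (ι → ℝ)) (δ : ℝ) (X Y : (ι → SignType) → ι → ℝ) : Prop where
  isDualPair : ∀ p, IsDualPair K δ p (X p) (Y p)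
  left_single : ∀ i a, a ≠ 0 → X (Pi.single i a) = signVec (Pi.single i a)
  right_single : ∀ i a, a ≠ 0 → Y (Pi.single i a) = signVec (Pi.single i a)

variable [Nonempty ι]

lemma exists_isDualPair (h : IsCubePosition K δ) (p : ι → SignType) :
    ∃ x y, IsDualPair K δ p x y := by
  rcases eq_or_ne p 0 with rfl | hp
  · refine ⟨0, 0, h.zero_mem, zero_mem_dotPolar K, fun hp => (hp rfl).elim, ?_, ?_⟩
    · simpa [signVec_zero] using mul_nonneg (Nat.cast_nonneg _) h.nonneg
    · simpa [signVec_zero] using h.nonneg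
  have h_card : (0 : ℝ) < #(signSupport p) := by exact_mod_cast card_signSupport_pos hp
  obtain ⟨y, hy, hy_pos, hy_le⟩ := exists_forall_sum_div_le_card (p := p) (convex_dotPolar K)
    h.isCompact_dotPolar (h.smul_signVec_mem_dotPolar p)
    (fun i => by
      simp only [Pi.smul_apply, smul_eq_mul, signVec, mul_left_comm]
      exact mul_nonneg (by positivity) (mul_self_nonneg _))
    fun i hi => by
      simp only [Pi.smul_apply, smul_eq_mul, signVec, mul_left_comm, coe_sign_mul_self hi]
      positivity
  have hx : supportInv p y ∈ K :=
    mem_of_forall_dotPolar_le_one h.convex h.isClosed h.zero_mem fun z hz => by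
      rw [supportInv_dotProduct, div_le_one₀ h_card]
      exact hy_le z hz
  have hy_low : ∀ i, p i ≠ 0 → (#(signSupport p) : ℝ)⁻¹ ≤ p i * y i := fun i hi =>
    inv_card_le_mul_of_abs_supportInv_le_one hi (hy_pos i hi)
      ((norm_le_pi_norm _ i).trans (h.norm_le_one _ hx))
  have hy_norm := norm_sub_smul_signVec_le hp h.nonneg (h.sum_abs_le y hy) hy_low
  refine ⟨supportInv p y, y, hx, hy, fun _ => supportInv_dotProduct_self hp fun i hi => ?_,
    norm_supportInv_sub_signVec_le hy_norm hy_low, hy_norm⟩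
  exact right_ne_zero_of_mul (hy_pos i hi).ne'

lemma isDualPair_single (h : IsCubePosition K δ) (i : ι) {a : SignType} (ha : a ≠ 0) :
    IsDualPair K δ (Pi.single i a) (signVec (Pi.single i a)) (signVec (Pi.single i a)) := by
  have h_card := card_signSupport_single i ha
  have h_smul := h.smul_signVec_mem_dotPolar (Pi.single i a)
  refine ⟨h.signVec_single_mem i a, by simpa [h_card] using h_smul, fun _ => ?_, ?_, ?_⟩
  · rw [signVec_dotProduct_self, h_card, Nat.cast_one]
  · simpa using mul_nonneg (Nat.cast_nonneg _) h.nonneg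
  · simpa [h_card] using h.nonneg

lemma exists_isDualFamily (h : IsCubePosition K δ) : ∃ X Y, IsDualFamily K δ X Y := by
  have h_pair (p : ι → SignType) : ∃ x y, IsDualPair K δ p x y ∧
      ∀ i a, a ≠ 0 → p = Pi.single i a → x = signVec p ∧ y = signVec p := by
    by_cases hp : ∃ i a, a ≠ 0 ∧ p = Pi.single i a
    · obtain ⟨i, a, ha, rfl⟩ := hp
      exact ⟨_, _, isDualPair_single h i ha, fun _ _ _ _ => ⟨rfl, rfl⟩⟩
    · obtain ⟨x, y, hxy⟩ := exists_isDualPair h p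
      exact ⟨x, y, hxy, fun i a ha hpa => (hp ⟨i, a, ha, hpa⟩).elim⟩
  choose X Y hXY h_single using h_pair
  exact ⟨X, Y, hXY, fun i a ha => (h_single _ i a ha rfl).1,
    fun i a ha => (h_single _ i a ha rfl).2⟩

end DualPairs

section PerturbedMaps

open Finset

variable {ι : Type*} [Fintype ι] {K S : Set (ι → ℝ)} {δ : ℝ} {x y w w' : ι → ℝ}
  {p r s r' s' : ι → SignType} {X Y Z : (ι → SignType) → ι → ℝ} {c : (ι → SignType) → ℝ}

/-- If the points `Z p` satisfy the constraints `Z p ⬝ᵥ y ≤ c p` for `y ∈ S`, then the slack at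
`r` and `s` leaves room for the correction `w`. -/
def IsAdmissibleBump (S : Set (ι → ℝ)) (c : (ι → SignType) → ℝ) (Z : (ι → SignType) → ι → ℝ)
    (r s : ι → SignType) (w : ι → ℝ) : Prop :=
  ∀ y ∈ S, w ⬝ᵥ y ≤ (c r - Z r ⬝ᵥ y) + (c s - Z s ⬝ᵥ y)

lemma isAdmissibleBump_zero (hZ : ∀ p, ∀ y ∈ S, Z p ⬝ᵥ y ≤ c p) (r s : ι → SignType) :
    IsAdmissibleBump S c Z r s 0 := fun y hy => by
  rw [zero_dotProduct]
  linarith [hZ r y hy, hZ s y hy]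

lemma card_smul_dotProduct_le (hy : y ∈ dotPolar K) (p : ι → SignType) (hx : x ∈ K) :
    ((#(signSupport p) : ℝ) • y) ⬝ᵥ x ≤ #(signSupport p) := by
  rw [smul_dotProduct, smul_eq_mul, dotProduct_comm]
  exact mul_le_of_le_one_right (Nat.cast_nonneg _) (hy x hx)

lemma flagBump_mul_le {a b d : ℝ} (ha : 0 ≤ a) (hb : 0 ≤ b) (hd : d ≤ a + b) :
    flagBump r s x * d ≤ flagCoord r x * a + flagCoord s x * b := calc
  flagBump r s x * d ≤ flagBump r s x * (a + b) :=
    mul_le_mul_of_nonneg_left hd (flagBump_nonneg r s x)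
  _ = flagBump r s x * a + flagBump r s x * b := mul_add _ _ _
  _ ≤ flagCoord r x * a + flagCoord s x * b :=
    add_le_add (mul_le_mul_of_nonneg_right (min_le_left _ _) ha)
      (mul_le_mul_of_nonneg_right (min_le_right _ _) hb)

lemma norm_card_smul_sub_signVec_le
    (hy : ‖y - (#(signSupport p) : ℝ)⁻¹ • signVec p‖ ≤ δ) :
    ‖(#(signSupport p) : ℝ) • y - signVec p‖ ≤ Fintype.card ι * δ := by
  have hδ : 0 ≤ δ := (norm_nonneg _).trans hy
  rcases eq_or_ne p 0 with rfl | hp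
  · have h_supp : signSupport (0 : ι → SignType) = ∅ := by ext; simp [mem_signSupport]
    simpa [signVec_zero, h_supp] using mul_nonneg (Nat.cast_nonneg _) hδ
  have h_card : (#(signSupport p) : ℝ) ≠ 0 := by exact_mod_cast (card_signSupport_pos hp).ne'
  have h_smul : (#(signSupport p) : ℝ) • y - signVec p
      = (#(signSupport p) : ℝ) • (y - (#(signSupport p) : ℝ)⁻¹ • signVec p) := by
    rw [smul_sub, smul_smul, mul_inv_cancel₀ h_card, one_smul]
  rw [h_smul, norm_smul, Real.norm_of_nonneg (Nat.cast_nonneg _)]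
  exact mul_le_mul (by exact_mod_cast card_le_univ _) hy (norm_nonneg _) (Nat.cast_nonneg _)

-- Duality makes the first-order terms cancel: up to sign, their sum is
-- `(x - signVec p) ⬝ᵥ (y - k⁻¹ • signVec p)`, which is quadratic in `δ`.
lemma neg_sq_le_of_isDualPair (h : IsDualPair K δ p x y) :
    -(Fintype.card ι * δ) ^ 2 ≤ (x - signVec p) ⬝ᵥ signVec p / #(signSupport p)
      + ((#(signSupport p) : ℝ) • y - signVec p) ⬝ᵥ signVec p / #(signSupport p) := by
  have hδ : 0 ≤ δ := (norm_nonneg _).trans h.norm_sub_smul_signVec_le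
  rcases eq_or_ne p 0 with rfl | hp
  · simpa [signVec_zero] using sq_nonneg _
  set k := (#(signSupport p) : ℝ) with hk
  have hk_pos : 0 < k := by rw [hk]; exact_mod_cast card_signSupport_pos hp
  have h_cancel : (x - signVec p) ⬝ᵥ signVec p / k + (k • y - signVec p) ⬝ᵥ signVec p / k
      = -((x - signVec p) ⬝ᵥ (y - k⁻¹ • signVec p)) := by
    simp only [sub_dotProduct, dotProduct_sub, smul_dotProduct, dotProduct_smul, smul_eq_mul,
      signVec_dotProduct_self, h.dotProduct_eq_one hp, dotProduct_comm (signVec p) y, ← hk]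
    field_simp
    ring
  have h_sum : ∑ i, |(y - k⁻¹ • signVec p) i| ≤ Fintype.card ι * δ := by
    refine (Pi.sum_norm_apply_le_norm (y - k⁻¹ • signVec p)).trans ?_
    rw [nsmul_eq_mul]
    exact mul_le_mul_of_nonneg_left h.norm_sub_smul_signVec_le (Nat.cast_nonneg _)
  rw [h_cancel, neg_le_neg_iff]
  calc (x - signVec p) ⬝ᵥ (y - k⁻¹ • signVec p)
      ≤ ‖x - signVec p‖ * ∑ i, |(y - k⁻¹ • signVec p) i| :=
        (le_abs_self _).trans (abs_dotProduct_le _ _)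
    _ ≤ (Fintype.card ι * δ) * (Fintype.card ι * δ) :=
        mul_le_mul h.norm_sub_signVec_le h_sum (by positivity) (by positivity)
    _ = (Fintype.card ι * δ) ^ 2 := (sq _).symm

variable [DecidableEq ι]

lemma add_flagField_sub_signVec (Z : (ι → SignType) → ι → ℝ) (r s : ι → SignType) (w x : ι → ℝ) :
    x + flagField (fun p => Z p - signVec p) r s w x
      = ∑ p, flagCoord p x • Z p + flagBump r s x • w := by
  simp only [flagField, smul_sub, sum_sub_distrib, sum_flagCoord_smul_signVec]
  abel

lemma add_flagField_dotProduct_le (hrs : r ≠ s) (hZ : ∀ p, Z p ⬝ᵥ y ≤ c p)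
    (hw : w ⬝ᵥ y ≤ (c r - Z r ⬝ᵥ y) + (c s - Z s ⬝ᵥ y)) :
    (x + flagField (fun p => Z p - signVec p) r s w x) ⬝ᵥ y ≤ ∑ p, c p * flagCoord p x := by
  have h_pair : flagBump r s x * (w ⬝ᵥ y) ≤ ∑ p, flagCoord p x * (c p - Z p ⬝ᵥ y) := by
    refine (flagBump_mul_le (sub_nonneg.2 (hZ r)) (sub_nonneg.2 (hZ s)) hw).trans ?_
    rw [← sum_pair hrs (f := fun p => flagCoord p x * (c p - Z p ⬝ᵥ y))]
    exact sum_le_sum_of_subset_of_nonneg (subset_univ _) fun p _ _ =>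
      mul_nonneg (flagCoord_nonneg p x) (sub_nonneg.2 (hZ p))
  rw [add_flagField_sub_signVec, add_dotProduct, sum_dotProduct]
  simp only [smul_dotProduct, smul_eq_mul]
  calc ∑ p, flagCoord p x * (Z p ⬝ᵥ y) + flagBump r s x * (w ⬝ᵥ y)
      ≤ ∑ p, flagCoord p x * (Z p ⬝ᵥ y) + ∑ p, flagCoord p x * (c p - Z p ⬝ᵥ y) := by gcongr
    _ = ∑ p, c p * flagCoord p x := by
        rw [← sum_add_distrib]
        exact sum_congr rfl fun p _ => by ring

lemma mapsTo_add_flagField_closedBall (hK : Convex ℝ K) (hK_closed : IsClosed K) (hK_zero : 0 ∈ K)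
    (hX : ∀ p, X p ∈ K) (hrs : r ≠ s) (hw : IsAdmissibleBump (dotPolar K) (fun _ => 1) X r s w) :
    Set.MapsTo (fun x => x + flagField (fun p => X p - signVec p) r s w x)
      (Metric.closedBall 0 1) K := fun x hx => by
  refine mem_of_forall_dotPolar_le_one hK hK_closed hK_zero fun y hy => ?_
  refine (add_flagField_dotProduct_le hrs (fun p => hy _ (hX p)) (hw y hy)).trans ?_
  simpa only [one_mul, sum_flagCoord, mem_closedBall_zero_iff] using hx

lemma mapsTo_add_flagField_crossPolytope (hY : ∀ p, Y p ∈ dotPolar K) (hrs : r ≠ s)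
    (hw : IsAdmissibleBump K (fun p => #(signSupport p))
      (fun p => (#(signSupport p) : ℝ) • Y p) r s w) :
    Set.MapsTo (fun y => y + flagField (fun p => (#(signSupport p) : ℝ) • Y p - signVec p) r s w y)
      (crossPolytope ι) (dotPolar K) := fun y hy x hx => by
  rw [dotProduct_comm]
  refine (add_flagField_dotProduct_le hrs (fun p => card_smul_dotProduct_le (hY p) p hx)
    (hw x hx)).trans ?_
  rw [sum_card_mul_flagCoord]
  exact hy

/-- The dual pairs `X p, Y p` leave room for a bump in `K` and one in its polar whose first-order
contributions to the two volumes add up to at least `g`. -/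
def HasGain (K : Set (ι → ℝ)) (δ : ℝ) (X Y : (ι → SignType) → ι → ℝ) (g : ℝ) : Prop :=
  ∃ (r s r' s' : ι → SignType) (w w' : ι → ℝ), r ≠ s ∧ r' ≠ s' ∧ ‖w‖ ≤ 6 * δ ∧ ‖w'‖ ≤ 6 * δ ∧
    IsAdmissibleBump (dotPolar K) (fun _ => 1) X r s w ∧
    IsAdmissibleBump K (fun p => #(signSupport p))
      (fun p => (#(signSupport p) : ℝ) • Y p) r' s' w' ∧
    g ≤ meanGrad (Metric.closedBall 0 1) (flagBump r s) w
      + meanGrad (crossPolytope ι) (flagBump r' s') w'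

/-- A Lipschitz constant, per unit of `δ`, of the displacements built from dual pairs and a bump
of size `6 * δ`. -/
def displacementLipConst (ι : Type*) [Fintype ι] [DecidableEq ι] : NNReal :=
  2 * (Fintype.card (ι → SignType) * Fintype.card ι + 6)

/-- The coefficient of `δ ^ 2` in the total second-order error of the two volume estimates. -/
def secondOrderConst (ι : Type*) [Fintype ι] [DecidableEq ι] : ℝ :=
  (2 * detErrorConst ι + (Fintype.card ι + detErrorConst ι) ^ 2) * displacementLipConst ι ^ 2
    + Fintype.card (ι → SignType) * Fintype.card ι ^ 2

lemma lipschitzWith_flagField_of_norm_le {δ : NNReal} {U : (ι → SignType) → ι → ℝ}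
    (hU : ∀ p, ‖U p‖ ≤ Fintype.card ι * δ) (hw : ‖w‖ ≤ 6 * δ) :
    LipschitzWith (displacementLipConst ι * δ) (flagField U r s w) := by
  convert lipschitzWith_flagField (η₁ := Fintype.card ι * δ) (η₂ := 6 * δ)
    (fun p => by simpa using hU p) (by simpa using hw) using 1
  rw [displacementLipConst]
  ring

variable [Nonempty ι]

lemma neg_le_meanDiv_add_meanDiv (hXY : ∀ p, IsDualPair K δ p (X p) (Y p)) :
    -(Fintype.card (ι → SignType) * (Fintype.card ι * δ) ^ 2)
        + (meanGrad (Metric.closedBall 0 1) (flagBump r s) w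
          + meanGrad (crossPolytope ι) (flagBump r' s') w')
      ≤ meanDiv (Metric.closedBall 0 1) (flagField (fun p => X p - signVec p) r s w)
        + meanDiv (crossPolytope ι)
          (flagField (fun p => (#(signSupport p) : ℝ) • Y p - signVec p) r' s' w') := by
  rw [meanDiv_flagField Metric.isBounded_closedBall.measure_lt_top.ne
    (Metric.measure_closedBall_pos volume 0 one_pos).ne' (isHyperoctahedral_closedBall 1),
    meanDiv_flagField volume_crossPolytope_ne_top
    (Measure.measure_pos_of_mem_nhds volume crossPolytope_mem_nhds_zero).ne'
    isHyperoctahedral_crossPolytope]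
  have h_sum := sum_le_sum fun p (_ : p ∈ univ) => calc
    -(Fintype.card ι * δ) ^ 2
      ≤ flagWeight p * -(Fintype.card ι * δ) ^ 2 := by
        nlinarith [flagWeight_le_one p, sq_nonneg (Fintype.card ι * δ)]
    _ ≤ _ := mul_le_mul_of_nonneg_left (neg_sq_le_of_isDualPair (hXY p)) (flagWeight_nonneg p)
  simp only [mul_add, sum_add_distrib, sum_const, nsmul_eq_mul, card_univ] at h_sum
  linarith

lemma four_pow_div_factorial_le_of_hasGain (h : IsCubePosition K δ)
    (hXY : ∀ p, IsDualPair K δ p (X p) (Y p))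
    (h_small : (Fintype.card ι + detErrorConst ι) * (displacementLipConst ι * δ) ≤ 1)
    (h_gain : HasGain K δ X Y (secondOrderConst ι * δ ^ 2)) :
    (4 : ℝ≥0∞) ^ Fintype.card ι / (Fintype.card ι).factorial ≤ volume K * volume (dotPolar K) := by
  obtain ⟨r, s, r', s', w, w', hrs, hrs', hw_norm, hw'_norm, hw, hw', h_gain⟩ := h_gain
  lift δ to NNReal using h.nonneg
  have h_lt : displacementLipConst ι * δ < 1 := by
    have h_card : (1 : ℝ) ≤ Fintype.card ι := by exact_mod_cast Fintype.card_pos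
    have h_pos : (0 : ℝ) ≤ displacementLipConst ι * δ := by positivity
    have : (displacementLipConst ι * δ : ℝ) < 1 := by
      nlinarith [detErrorConst_pos (ι := ι), h_pos]
    exact_mod_cast this
  rw [← volume_closedBall_mul_volume_crossPolytope]
  refine volume_mul_volume_le_of_meanDiv
    (lipschitzWith_flagField_of_norm_le (fun p => (hXY p).norm_sub_signVec_le) hw_norm)
    (lipschitzWith_flagField_of_norm_le
      (fun p => norm_card_smul_sub_signVec_le (hXY p).norm_sub_smul_signVec_le) hw'_norm)
    h_lt Metric.isClosed_closedBall.measurableSet isClosed_crossPolytope.measurableSet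
    Metric.isBounded_closedBall.measure_lt_top.ne volume_crossPolytope_ne_top
    (mapsTo_add_flagField_closedBall h.convex h.isClosed h.zero_mem (fun p => (hXY p).mem) hrs hw)
    (mapsTo_add_flagField_crossPolytope (fun p => (hXY p).mem_dotPolar) hrs' hw')
    (by push_cast; exact h_small) ?_
  refine le_trans ?_ (neg_le_meanDiv_add_meanDiv hXY)
  rw [secondOrderConst] at h_gain
  push_cast
  linarith

end PerturbedMaps

section Gain

open Finset Topology

lemma exists_sign_mul_abs_eq (t : ℝ) : ∃ a : SignType, a ≠ 0 ∧ a * |t| = t := by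
  rcases lt_or_ge t 0 with ht | ht
  · exact ⟨-1, by decide, by simp [abs_of_neg ht]⟩
  · exact ⟨1, by decide, by simp [abs_of_nonneg ht]⟩

lemma coe_sign_mul_le_abs (a : SignType) (t : ℝ) : a * t ≤ |t| := by
  refine (le_abs_self _).trans ?_
  rw [abs_mul]
  exact mul_le_of_le_one_left (abs_nonneg t) (abs_sign_le_one a)

lemma abs_sub_sign_le {a : SignType} (ha : a ≠ 0) {ε z : ℝ} (hz : |z| ≤ 1) (h : 1 - ε ≤ a * z) :
    |z - a| ≤ ε := by
  have h_eq : z - a = a * (a * z - 1) := by linear_combination (-z) * coe_sign_mul_self ha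
  rw [h_eq, abs_mul, abs_coe_sign ha, one_mul]
  exact abs_le.2 ⟨by linarith, by linarith [coe_sign_mul_le_abs a z]⟩

lemma isSubpattern_single {ι : Type*} [DecidableEq ι] (p : ι → SignType) (i : ι) :
    IsSubpattern (Pi.single i (p i)) p := fun k hk => by
  obtain rfl : k = i := by
    by_contra hki
    exact hk (by rw [Pi.single_eq_of_ne hki])
  rw [Pi.single_eq_same]

lemma abs_sub_signVec_update_single_le {ι : Type*} [DecidableEq ι] {i j : ι} (hj : j ≠ i)
    {a b : SignType} {ξ : ι → ℝ} {c : ℝ} (hξi : |ξ i - a| ≤ c) (hξj : b * |ξ j| = ξ j) {k : ι}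
    (hk : k = i ∨ k = j) :
    |ξ k - signVec (Pi.single i a) k - |ξ j| * (signVec (Function.update (Pi.single i a) j b) k
      - signVec (Pi.single i a) k)| ≤ c := by
  rcases hk with rfl | rfl
  · simpa [signVec, Function.update_of_ne hj.symm] using hξi
  · have h_zero : ξ k - |ξ k| * b = 0 := by linear_combination -hξj
    simpa [signVec, Pi.single_eq_of_ne hj, h_zero] using (abs_nonneg _).trans hξi

variable {ι : Type*} [Fintype ι] {K B : Set (ι → ℝ)} {δ c κ t : ℝ} {x y ξ u : ι → ℝ}
  {q r s v : ι → SignType} {X Y : (ι → SignType) → ι → ℝ}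

lemma exists_sign_mul_le_of_dotProduct_le_one (hδ₀ : 0 ≤ δ) (hδ₁ : δ ≤ 1)
    (hξ : ∑ i, |ξ i| = 1 + δ) (hv : ∀ i, v i * |ξ i| = ξ i) (hx : x ⬝ᵥ ξ ≤ 1) :
    ∃ i, v i * x i ≤ 1 - δ / 2 := by
  by_contra! h
  obtain ⟨i, -, hi⟩ : ∃ i ∈ univ, |ξ i| ≠ 0 := exists_ne_zero_of_sum_ne_zero (by linarith)
  have h_lt : ∑ i, |ξ i| * (1 - δ / 2) < ∑ i, |ξ i| * (v i * x i) :=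
    sum_lt_sum (fun j _ => mul_le_mul_of_nonneg_left (h j).le (abs_nonneg _))
      ⟨i, mem_univ i, mul_lt_mul_of_pos_left (h i) ((abs_nonneg _).lt_of_ne' hi)⟩
  have h_dot : ∑ i, |ξ i| * (v i * x i) = x ⬝ᵥ ξ :=
    sum_congr rfl fun j _ => by linear_combination (x j) * hv j
  rw [← sum_mul, hξ, h_dot] at h_lt
  nlinarith

lemma le_meanGrad_flagBump (hB : volume B ≠ ⊤) (hB_symm : IsHyperoctahedral B) (hc : 0 ≤ c)
    (hu : ∀ i, r i ≠ 0 ∨ s i ≠ 0 → |u i - t * signVec r i| ≤ c) :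
    t * meanGrad B (flagBump r s) (signVec r) - 2 * c ≤ meanGrad B (flagBump r s) u := by
  have h := abs_meanGrad_flagBump_le (u := u - t • signVec r) hB hB_symm hc hu
  rw [map_sub, map_smul, smul_eq_mul] at h
  linarith [neg_abs_le (meanGrad B (flagBump r s) u - t * meanGrad B (flagBump r s) (signVec r))]

/-- The position of `ξ` relative to the segment from `signVec a` to `y`, seen from its point with
parameter `t`. -/
def polarBump (a : ι → SignType) (ξ y : ι → ℝ) (t : ℝ) : ι → ℝ :=
  ξ - signVec a - t • (y - signVec a)

lemma isAdmissibleBump_polarBump {a : ι → SignType} (hY : ∀ p, Y p ∈ dotPolar K)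
    (hξ : ξ ∈ dotPolar K) (ha : Y a = signVec a) (ha_card : #(signSupport a) = 1) (hq : q ≠ 0)
    (ht₀ : 0 ≤ t) (ht₁ : t ≤ 1) :
    IsAdmissibleBump K (fun p => #(signSupport p)) (fun p => (#(signSupport p) : ℝ) • Y p) q a
      (polarBump a ξ (Y q) t) := fun x hx => by
  have h_card : (1 : ℝ) ≤ #(signSupport q) := by exact_mod_cast card_signSupport_pos hq
  have hξx : ξ ⬝ᵥ x ≤ 1 := dotProduct_comm ξ x ▸ hξ x hx
  have hax : signVec a ⬝ᵥ x ≤ 1 := by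
    rw [← ha, dotProduct_comm]
    exact hY a x hx
  have hqx : Y q ⬝ᵥ x ≤ 1 := dotProduct_comm (Y q) x ▸ hY q x hx
  simp only [polarBump, sub_dotProduct, smul_dotProduct, smul_eq_mul, ha, ha_card, Nat.cast_one,
    one_mul]
  nlinarith [mul_nonneg ht₀ (sub_nonneg.2 hax),
    mul_le_mul_of_nonneg_right (ht₁.trans h_card) (sub_nonneg.2 hqx)]

lemma norm_polarBump_le {a : ι → SignType} (hξ : ‖ξ - signVec a‖ ≤ 2 * δ) (hy : ‖y‖ ≤ 1)
    (ht₀ : 0 ≤ t) (ht : t ≤ 2 * δ) : ‖polarBump a ξ y t‖ ≤ 6 * δ := calc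
  ‖polarBump a ξ y t‖ ≤ ‖ξ - signVec a‖ + ‖t • (y - signVec a)‖ := norm_sub_le _ _
  _ ≤ 2 * δ + 2 * δ * (1 + 1) := by
    rw [norm_smul, Real.norm_of_nonneg ht₀]
    gcongr
    · exact ht₀.trans ht
    · exact (norm_sub_le _ _).trans (add_le_add hy (norm_signVec_le_one a))
  _ = 6 * δ := by ring

lemma abs_polarBump_sub_le {a : ι → SignType} {i : ι} {ε : ℝ}
    (hξ : |ξ i - signVec a i - t * (signVec q i - signVec a i)| ≤ ε)
    (hy : ‖y - (2 : ℝ)⁻¹ • signVec q‖ ≤ δ) (ht₀ : 0 ≤ t) (ht : t ≤ 2 * δ) :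
    |polarBump a ξ y t i - t / 2 * signVec q i| ≤ ε + 2 * δ ^ 2 := by
  have h_split : polarBump a ξ y t i - t / 2 * signVec q i
      = (ξ i - signVec a i - t * (signVec q i - signVec a i))
        - t * (y - (2 : ℝ)⁻¹ • signVec q) i := by
    simp only [polarBump, Pi.sub_apply, Pi.smul_apply, smul_eq_mul]
    ring
  have hyi : |(y - (2 : ℝ)⁻¹ • signVec q) i| ≤ δ := (norm_le_pi_norm _ i).trans hy
  calc |polarBump a ξ y t i - t / 2 * signVec q i|
      ≤ |ξ i - signVec a i - t * (signVec q i - signVec a i)|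
        + |t * (y - (2 : ℝ)⁻¹ • signVec q) i| := by
        rw [h_split]
        exact abs_sub _ _
    _ ≤ ε + 2 * δ * δ := by
        rw [abs_mul, abs_of_nonneg ht₀]
        gcongr
        exact ht₀.trans ht
    _ = ε + 2 * δ ^ 2 := by ring

lemma hasGain_of_primal (hXY : ∀ p, IsDualPair K δ p (X p) (Y p)) (hrs : r ≠ s)
    (hu_norm : ‖u‖ ≤ 6 * δ) (hu : IsAdmissibleBump (dotPolar K) (fun _ => 1) X r s u) :
    HasGain K δ X Y (meanGrad (Metric.closedBall 0 1) (flagBump r s) u) := by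
  refine ⟨r, s, r, s, u, 0, hrs, hrs, hu_norm, ?_, hu, isAdmissibleBump_zero
    (fun p x hx => card_smul_dotProduct_le (hXY p).mem_dotPolar p hx) r s, ?_⟩
  · rw [norm_zero]
    exact (norm_nonneg u).trans hu_norm
  · rw [map_zero, add_zero]

lemma hasGain_of_polar (hXY : ∀ p, IsDualPair K δ p (X p) (Y p)) (hrs : r ≠ s)
    (hu_norm : ‖u‖ ≤ 6 * δ)
    (hu : IsAdmissibleBump K (fun p => #(signSupport p))
      (fun p => (#(signSupport p) : ℝ) • Y p) r s u) :
    HasGain K δ X Y (meanGrad (crossPolytope ι) (flagBump r s) u) := by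
  refine ⟨r, s, r, s, 0, u, hrs, hrs, ?_, hu_norm,
    isAdmissibleBump_zero (S := dotPolar K) (fun p y hy => hy _ (hXY p).mem) r s, hu, ?_⟩
  · rw [norm_zero]
    exact (norm_nonneg u).trans hu_norm
  · rw [map_zero, zero_add]

lemma HasGain.mono {g g' : ℝ} (h : HasGain K δ X Y g') (hg : g ≤ g') : HasGain K δ X Y g := by
  obtain ⟨r, s, r', s', w, w', hrs, hrs', hw, hw', hadm, hadm', h_gain⟩ := h
  exact ⟨r, s, r', s', w, w', hrs, hrs', hw, hw', hadm, hadm', hg.trans h_gain⟩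

lemma hasGain_of_isAdmissibleBump_smul (hXY : ∀ p, IsDualPair K δ p (X p) (Y p)) (hrs : r ≠ s)
    (hc₀ : 0 ≤ c) (hc : c ≤ 6 * δ)
    (h : IsAdmissibleBump (dotPolar K) (fun _ => 1) X r s (c • signVec r))
    (hκ : κ ≤ meanGrad (Metric.closedBall 0 1) (flagBump r s) (signVec r)) :
    HasGain K δ X Y (c * κ) := by
  refine (hasGain_of_primal hXY hrs ?_ h).mono ?_
  · rw [norm_smul, Real.norm_of_nonneg hc₀]
    exact (mul_le_of_le_one_right hc₀ (norm_signVec_le_one r)).trans hc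
  · rw [map_smul, smul_eq_mul]
    exact mul_le_mul_of_nonneg_left hκ hc₀

lemma abs_le_of_one_sub_le_sign_mul {i j : ι} {a : SignType} (hξ : ∑ i, |ξ i| ≤ 1 + δ)
    (hi : 1 - c ≤ a * ξ i) (hj : j ≠ i) : |ξ j| ≤ δ + c := by
  classical
  have h_pair : |ξ i| + |ξ j| ≤ ∑ k, |ξ k| := by
    rw [← sum_pair hj.symm (f := fun k => |ξ k|)]
    exact sum_le_sum_of_subset_of_nonneg (subset_univ _) fun _ _ _ => abs_nonneg _
  linarith [coe_sign_mul_le_abs a (ξ i)]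

lemma exists_ne_le_abs_of_le_dotProduct {i : ι} {a : SignType} (ha : a ≠ 0) (hδ₀ : 0 < δ)
    (hδ₁ : δ ≤ 1) (hx : ‖x‖ ≤ 1) (hxi : a * x i ≤ 1 - δ / 2) (hξ₀ : 0 ≤ a * ξ i)
    (hξ₁ : a * ξ i ≤ 1) (h : 1 - δ / 4 ≤ x ⬝ᵥ ξ) :
    ∃ j ≠ i, δ / (4 * Fintype.card ι) ≤ |ξ j| := by
  classical
  have h_diag : x i * ξ i ≤ 1 - δ / 2 := by
    have h_eq : x i * ξ i = (a * x i) * (a * ξ i) := by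
      linear_combination (-(x i * ξ i)) * coe_sign_mul_self ha
    rw [h_eq]
    nlinarith
  have h_sum : ∑ _j : ι, δ / (4 * Fintype.card ι) ≤ ∑ j, if j = i then 0 else |ξ j| := by
    have h_const : ∑ _j : ι, δ / (4 * Fintype.card ι) = δ / 4 := by
      have h_card : (Fintype.card ι : ℝ) ≠ 0 := by
        exact_mod_cast (Fintype.card_pos_iff.2 ⟨i⟩).ne'
      rw [sum_const, card_univ, nsmul_eq_mul]
      field_simp
    have h_dot : x ⬝ᵥ ξ ≤ ∑ j, ((if j = i then 1 - δ / 2 else 0) + if j = i then 0 else |ξ j|) := by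
      refine sum_le_sum fun j _ => ?_
      split_ifs with hj
      · rw [hj, add_zero]
        exact h_diag
      · rw [zero_add]
        refine (le_abs_self _).trans ?_
        rw [abs_mul]
        exact mul_le_of_le_one_left (abs_nonneg _) ((norm_le_pi_norm x j).trans hx)
    rw [sum_add_distrib, sum_ite_eq' univ i, if_pos (mem_univ i)] at h_dot
    linarith
  obtain ⟨j, -, hj⟩ := exists_le_of_sum_le ⟨i, mem_univ i⟩ h_sum
  have h_pos : 0 < δ / (4 * Fintype.card ι) :=
    div_pos hδ₀ (mul_pos four_pos (by exact_mod_cast Fintype.card_pos_iff.2 ⟨i⟩))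
  by_cases hji : j = i
  · rw [if_pos hji] at hj
    linarith
  · exact ⟨j, hji, by rwa [if_neg hji] at hj⟩

variable [DecidableEq ι]

lemma card_signSupport_update_single {i j : ι} (hj : j ≠ i) {a b : SignType} (ha : a ≠ 0)
    (hb : b ≠ 0) :
    #(signSupport (Function.update (Pi.single i a : ι → SignType) j b)) = 2 := by
  have h_supp : signSupport (Function.update (Pi.single i a : ι → SignType) j b) = {i, j} := by
    ext k
    by_cases hkj : k = j
    · simp [mem_signSupport, hkj, hb]
    · by_cases hki : k = i
      · subst hki
        simp [mem_signSupport, hkj, ha]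
      · simp [mem_signSupport, hkj, hki]
  rw [h_supp, card_pair hj.symm]

lemma norm_sub_signVec_single_le {i : ι} {a : SignType} (hξ_near : |ξ i - a| ≤ c)
    (hξ_far : ∀ k ≠ i, |ξ k| ≤ c) : ‖ξ - signVec (Pi.single i a)‖ ≤ c := by
  refine (pi_norm_le_iff_of_nonneg ((abs_nonneg _).trans hξ_near)).2 fun k => ?_
  rw [Real.norm_eq_abs, Pi.sub_apply, signVec_single]
  rcases eq_or_ne k i with rfl | hk
  · rwa [Pi.single_eq_same]
  · rw [Pi.single_eq_of_ne hk, sub_zero]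
    exact hξ_far k hk

lemma hasGain_of_one_sub_le_sign_mul [Nonempty ι] (h : IsCubePosition K δ)
    (hXY : IsDualFamily K δ X Y) (hξ : ξ ∈ dotPolar K) {i j : ι} (hj : j ≠ i) {a b : SignType}
    (ha : a ≠ 0) (hb : b ≠ 0) (hc₀ : 0 ≤ c) (hc : c ≤ δ) (hi : 1 - c ≤ a * ξ i)
    (hbj : b * |ξ j| = ξ j)
    (hκ : κ ≤ meanGrad (crossPolytope ι)
      (flagBump (Function.update (Pi.single i a) j b) (Pi.single i a))
      (signVec (Function.update (Pi.single i a) j b))) :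
    HasGain K δ X Y (|ξ j| / 2 * κ - 2 * (c + 2 * δ ^ 2)) := by
  have hq_card := card_signSupport_update_single hj ha hb
  set e : ι → SignType := Pi.single i a with he
  set q := Function.update e j b with hq
  have hqj : q j = b := Function.update_self ..
  have hq₀ : q ≠ 0 := fun h₀ => hb (by rw [← hqj, h₀, Pi.zero_apply])
  have hqe : q ≠ e := fun h₀ => hb (by rw [← hqj, h₀, he, Pi.single_eq_of_ne hj])
  have hξ_far : ∀ k ≠ i, |ξ k| ≤ 2 * δ := fun k hk =>
    (abs_le_of_one_sub_le_sign_mul (h.sum_abs_le ξ hξ) hi hk).trans (by linarith)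
  have hξ_near : |ξ i - a| ≤ c := abs_sub_sign_le ha (h.abs_dotPolar_le_one hξ i) hi
  have hYq : ‖Y q - (2 : ℝ)⁻¹ • signVec q‖ ≤ δ := by
    simpa only [hq_card, Nat.cast_ofNat] using (hXY.isDualPair q).norm_sub_smul_signVec_le
  have hYq_norm : ‖Y q‖ ≤ 1 := (pi_norm_le_iff_of_nonneg zero_le_one).2
    (h.abs_dotPolar_le_one (hXY.isDualPair q).mem_dotPolar)
  have h_adm := isAdmissibleBump_polarBump (fun p => (hXY.isDualPair p).mem_dotPolar) hξ
    (hXY.right_single i a ha) (card_signSupport_single i ha) hq₀ (abs_nonneg (ξ j))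
    (h.abs_dotPolar_le_one hξ j)
  refine (hasGain_of_polar hXY.isDualPair hqe (norm_polarBump_le (norm_sub_signVec_single_le
    (hξ_near.trans (by linarith)) hξ_far) hYq_norm (abs_nonneg _) (hξ_far j hj)) h_adm).mono ?_
  have h_err : ∀ k, q k ≠ 0 ∨ e k ≠ 0 →
      |polarBump e ξ (Y q) |ξ j| k - |ξ j| / 2 * signVec q k| ≤ c + 2 * δ ^ 2 := fun k hk => by
    refine abs_polarBump_sub_le (abs_sub_signVec_update_single_le hj hξ_near hbj ?_) hYq
      (abs_nonneg _) (hξ_far j hj)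
    by_contra! hk_ne
    simp [hq, he, hk_ne] at hk
  refine le_trans ?_ (le_meanGrad_flagBump volume_crossPolytope_ne_top
    isHyperoctahedral_crossPolytope (by positivity) h_err)
  gcongr

lemma exists_mem_dotPolar_of_not_isAdmissibleBump (hXY : IsDualFamily K δ X Y) {i : ι}
    {a : SignType} (ha : a ≠ 0) (hc : 0 ≤ c)
    (h : ¬ IsAdmissibleBump (dotPolar K) (fun _ => 1) X (Pi.single i a) v
      (c • signVec (Pi.single i a))) :
    ∃ ξ ∈ dotPolar K, a * ξ i ≤ 1 ∧ 1 - c < a * ξ i ∧ 1 - c < X v ⬝ᵥ ξ := by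
  simp only [IsAdmissibleBump, not_forall, not_le, hXY.left_single i a ha, smul_dotProduct,
    smul_eq_mul, signVec_single, single_dotProduct] at h
  obtain ⟨ξ, hξ, h⟩ := h
  have hξi : a * ξ i ≤ 1 := by
    have hX := hξ _ (hXY.isDualPair (Pi.single i a)).mem
    rwa [hXY.left_single i a ha, signVec_single, single_dotProduct] at hX
  have hξX : X v ⬝ᵥ ξ ≤ 1 := hξ _ (hXY.isDualPair v).mem
  have h_mul : c * (a * ξ i) ≤ c := mul_le_of_le_one_right hc hξi
  exact ⟨ξ, hξ, hξi, by linarith, by linarith⟩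

lemma exists_sign_mul_left_le [Nonempty ι] (h : IsCubePosition K δ) (hδ : δ ≤ 1)
    (hXY : IsDualFamily K δ X Y) (hξ : ξ ∈ dotPolar K) (hξ_sum : ∑ i, |ξ i| = 1 + δ) :
    ∃ v : ι → SignType, (∀ i, v i ≠ 0) ∧ ∃ i, (v i : ℝ) * X v i ≤ 1 - δ / 2 := by
  choose v hv₀ hv using fun i => exists_sign_mul_abs_eq (ξ i)
  exact ⟨v, hv₀, exists_sign_mul_le_of_dotProduct_le_one h.nonneg hδ hξ_sum hv
    (hξ _ (hXY.isDualPair v).mem)⟩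

-- A polar point `ξ` blocking the bump is almost normal to `K` at both `v i • eᵢ` and `X v`. Such a
-- `ξ` has a second coordinate of order `δ`, and the polar can be enlarged towards it.
lemma hasGain_of_not_isAdmissibleBump [Nonempty ι] (h : IsCubePosition K δ) (hδ : δ ≤ 1)
    (hXY : IsDualFamily K δ X Y) {i : ι} (hvi : v i ≠ 0) (hi : v i * X v i ≤ 1 - δ / 2)
    (hκ₀ : 0 ≤ κ)
    (hκ : ∀ r s, r ≠ 0 → s ≠ 0 → r ≠ s → IsSubpattern r s ∨ IsSubpattern s r →
      κ ≤ meanGrad (crossPolytope ι) (flagBump r s) (signVec r))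
    (hc₀ : 0 ≤ c) (hc : c ≤ δ / 4)
    (h_not : ¬ IsAdmissibleBump (dotPolar K) (fun _ => 1) X (Pi.single i (v i)) v
      (c • signVec (Pi.single i (v i)))) :
    HasGain K δ X Y (κ / (8 * Fintype.card ι) * δ - 2 * (c + 2 * δ ^ 2)) := by
  obtain ⟨ξ, hξ, hξi_le, hξi, hξX⟩ := exists_mem_dotPolar_of_not_isAdmissibleBump hXY hvi hc₀ h_not
  obtain ⟨j, hji, hj⟩ := exists_ne_le_abs_of_le_dotProduct hvi (by linarith) hδ
    (h.norm_le_one _ (hXY.isDualPair v).mem) hi (by linarith) hξi_le (by linarith)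
  obtain ⟨b, hb, hbj⟩ := exists_sign_mul_abs_eq (ξ j)
  set q : ι → SignType := Function.update (Pi.single i (v i)) j b with hq
  have hqi : q i = v i := by rw [hq, Function.update_of_ne hji.symm, Pi.single_eq_same]
  have hqj : q j = b := Function.update_self ..
  have hκ_q := hκ q (Pi.single i (v i)) (fun h₀ => hb (by rw [← hqj, h₀, Pi.zero_apply]))
    (by simpa using hvi) (fun h₀ => hb (by rw [← hqj, h₀, Pi.single_eq_of_ne hji]))
    (Or.inr (hqi ▸ isSubpattern_single q i))
  refine (hasGain_of_one_sub_le_sign_mul h hXY hξ hji hvi hb hc₀ (by linarith) hξi.le hbj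
    hκ_q).mono ?_
  have h_coeff : κ / (8 * Fintype.card ι) * δ = δ / (4 * Fintype.card ι) / 2 * κ := by
    field_simp
    ring
  rw [h_coeff]
  gcongr

lemma exists_pos_hasGain [Nontrivial ι] : ∃ b > 0, ∀ (K : Set (ι → ℝ)) (δ : ℝ)
    (X Y : (ι → SignType) → ι → ℝ), IsCubePosition K δ → δ ≤ 1 → IsDualFamily K δ X Y →
      (∃ ξ ∈ dotPolar K, ∑ i, |ξ i| = 1 + δ) → HasGain K δ X Y (b * δ - 4 * δ ^ 2) := by
  obtain ⟨κ, hκ_pos, hκ⟩ := exists_pos_le_meanGrad_flagBump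
    (Metric.closedBall_mem_nhds (0 : ι → ℝ) one_pos) Metric.isBounded_closedBall.measure_lt_top.ne
  obtain ⟨κ', hκ'_pos, hκ'⟩ := exists_pos_le_meanGrad_flagBump
    (crossPolytope_mem_nhds_zero (ι := ι)) volume_crossPolytope_ne_top
  set n := (Fintype.card ι : ℝ) with hn
  have hn_pos : 0 < n := by rw [hn]; exact_mod_cast Fintype.card_pos
  set c := min (1 / 4) (κ' / (32 * n))
  have hc_pos : 0 < c := by positivity
  refine ⟨min (c * κ) (κ' / (16 * n)), lt_min (mul_pos hc_pos hκ_pos) (by positivity),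
    fun K δ X Y h hδ hXY ⟨ξ, hξ, hξ_sum⟩ => ?_⟩
  have hδ₀ := h.nonneg
  obtain ⟨v, hv, i, hi⟩ := exists_sign_mul_left_le h hδ hXY hξ hξ_sum
  have hcδ : c * δ ≤ δ / 4 := by nlinarith [min_le_left (1 / 4) (κ' / (32 * n))]
  by_cases h_adm : IsAdmissibleBump (dotPolar K) (fun _ => 1) X (Pi.single i (v i)) v
      ((c * δ) • signVec (Pi.single i (v i)))
  · obtain ⟨j, hj⟩ := exists_ne i
    have h_ne : Pi.single i (v i) ≠ v := fun h_eq =>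
      hv j (by rw [← h_eq, Pi.single_eq_of_ne hj])
    refine (hasGain_of_isAdmissibleBump_smul hXY.isDualPair h_ne (by positivity) (by linarith)
      h_adm (hκ _ _ (by simpa using hv i) (fun h₀ => hv i (by rw [h₀, Pi.zero_apply])) h_ne
      (Or.inl (isSubpattern_single v i)))).mono ?_
    nlinarith [min_le_left (c * κ) (κ' / (16 * n))]
  · refine (hasGain_of_not_isAdmissibleBump h hδ hXY (hv i) hi hκ'_pos.le hκ' (by positivity) hcδ
      h_adm).mono ?_
    have h_coeff : κ' / (8 * n) = κ' / (16 * n) + 2 * (κ' / (32 * n)) := by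
      field_simp
      norm_num
    rw [← hn, h_coeff]
    nlinarith [min_le_right (c * κ) (κ' / (16 * n)), min_le_right (1 / 4) (κ' / (32 * n))]

theorem exists_pos_four_pow_div_factorial_le [Nontrivial ι] :
    ∃ δ₀ > 0, ∀ (K : Set (ι → ℝ)) (δ : ℝ), IsCubePosition K δ → δ ≤ δ₀ →
      (∃ ξ ∈ dotPolar K, ∑ i, |ξ i| = 1 + δ) →
        (4 : ℝ≥0∞) ^ Fintype.card ι / (Fintype.card ι).factorial
          ≤ volume K * volume (dotPolar K) := by
  obtain ⟨b, hb, h_gain⟩ := exists_pos_hasGain (ι := ι)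
  have hD : 0 < detErrorConst ι := detErrorConst_pos
  have hM : (0 : ℝ) < displacementLipConst ι := by
    rw [displacementLipConst]
    push_cast
    positivity
  have hS : 0 ≤ secondOrderConst ι := by
    rw [secondOrderConst]
    positivity
  refine ⟨min 1 (min (1 / ((Fintype.card ι + detErrorConst ι) * displacementLipConst ι))
    (b / (secondOrderConst ι + 4))), by positivity, fun K δ h hδ hξ => ?_⟩
  obtain ⟨hδ_one, hδ_lip, hδ_gain⟩ : δ ≤ 1 ∧ _ ∧ _ := by simpa only [le_min_iff] using hδ
  obtain ⟨X, Y, hXY⟩ := exists_isDualFamily h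
  rw [le_div_iff₀ (by positivity)] at hδ_lip hδ_gain
  refine four_pow_div_factorial_le_of_hasGain h hXY.isDualPair (by linarith)
    ((h_gain K δ X Y h hδ_one hXY hξ).mono ?_)
  nlinarith [h.nonneg]

end Gain

section NearPermutation

open Finset Topology Matrix

lemma prod_update_comp {ι M : Type*} [Fintype ι] [DecidableEq ι] [CommMonoid M] (A : ι → ι → M)
    (f : ι → ι) (i k : ι) :
    ∏ l, A l (Function.update f i k l) = A i k * ∏ l ∈ univ.erase i, A l (f l) := by
  rw [← mul_prod_erase _ _ (mem_univ i), Function.update_self]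
  exact congrArg _ (prod_congr rfl fun l hl => by rw [Function.update_of_ne (ne_of_mem_erase hl)])

variable {ι : Type*} [Fintype ι] {A : Matrix ι ι ℝ} {t θ : ℝ}

lemma mul_sum_abs_le_sum_abs_vecMul {σ : Equiv.Perm ι}
    (hσ : ∀ i, θ ≤ 2 * |A i (σ i)| - ∑ k, |A i k|) (y : ι → ℝ) :
    θ * ∑ i, |y i| ≤ ∑ k, |(y ᵥ* A) k| := by
  classical
  choose s hs₀ hs using fun i => exists_sign_mul_abs_eq (y i * A i (σ i))
  have h_row (i : ι) : θ * |y i| ≤ y i * (A *ᵥ signVec (s ∘ σ.symm)) i := by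
    set v := signVec (s ∘ σ.symm) with hv
    have hv_le (k : ι) : |v k| ≤ 1 := abs_signVec_le_one _ k
    have h_term (k : ι) : (if k = σ i then 2 * |y i * A i k| else 0) - |y i * A i k|
        ≤ y i * (A i k * v k) := by
      split_ifs with hk
      · have hvk : v k = s i := by simp [hv, signVec, hk]
        refine le_of_eq ?_
        rw [hvk, hk]
        linear_combination (s i : ℝ) * hs i - |y i * A i (σ i)| * coe_sign_mul_self (hs₀ i)
      · nlinarith [neg_abs_le (y i * A i k * v k), abs_mul (y i * A i k) (v k), hv_le k,
          abs_nonneg (y i * A i k)]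
    calc θ * |y i| ≤ (2 * |A i (σ i)| - ∑ k, |A i k|) * |y i| := by gcongr; exact hσ i
      _ = ∑ k, ((if k = σ i then 2 * |y i * A i k| else 0) - |y i * A i k|) := by
        simp only [sum_sub_distrib, sum_ite_eq', mem_univ, if_true, abs_mul, ← mul_sum]
        ring
      _ ≤ ∑ k, y i * (A i k * v k) := sum_le_sum fun k _ => h_term k
      _ = y i * (A *ᵥ v) i := (mul_sum _ _ _).symm
  calc θ * ∑ i, |y i| ≤ y ⬝ᵥ (A *ᵥ signVec (s ∘ σ.symm)) := by
        rw [mul_sum]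
        exact sum_le_sum fun i _ => h_row i
    _ = signVec (s ∘ σ.symm) ⬝ᵥ (y ᵥ* A) := by
        rw [Matrix.dotProduct_mulVec, dotProduct_comm]
    _ ≤ 1 * ∑ k, |(y ᵥ* A) k| := by
        refine (le_abs_self _).trans ((abs_dotProduct_le _ _).trans ?_)
        gcongr
        exact norm_signVec_le_one _
    _ = ∑ k, |(y ᵥ* A) k| := one_mul _

variable [DecidableEq ι]

lemma abs_det_le_sum_perm (A : Matrix ι ι ℝ) :
    |A.det| ≤ ∑ σ : Equiv.Perm ι, ∏ i, |A i (σ i)| := by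
  rw [← Matrix.det_transpose, Matrix.det_apply]
  refine (abs_sum_le_sum_abs _ _).trans_eq (sum_congr rfl fun σ _ => ?_)
  rcases Int.units_eq_one_or (Equiv.Perm.sign σ) with h | h <;> simp [h, abs_prod]

lemma sum_perm_add_sum_not_injective (F : (ι → ι) → ℝ) :
    ∑ σ : Equiv.Perm ι, F σ + ∑ f with ¬ Function.Injective f, F f = ∑ f, F f := by
  rw [← sum_filter_add_sum_filter_not univ Function.Injective F]
  refine congrArg (· + _) <| sum_bij (fun σ _ => ⇑σ) (fun σ _ => by simpa using σ.injective)
    (fun σ _ τ _ h => DFunLike.coe_injective h) (fun f hf => ?_) fun σ _ => rfl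
  exact ⟨Equiv.ofBijective f (Finite.injective_iff_bijective.1 (mem_filter.1 hf).2), mem_univ _,
    rfl⟩

lemma sum_perm_add_prod_le_prod_sum {B : ι → ι → ℝ} (hB : ∀ i k, 0 ≤ B i k) {f : ι → ι}
    (hf : ¬ f.Injective) :
    ∑ σ : Equiv.Perm ι, ∏ i, B i (σ i) + ∏ i, B i (f i) ≤ ∏ i, ∑ k, B i k := by
  rw [prod_univ_sum, Fintype.piFinset_univ,
    ← sum_perm_add_sum_not_injective fun g : ι → ι => ∏ i, B i (g i)]
  gcongr
  exact single_le_sum (f := fun g : ι → ι => ∏ i, B i (g i))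
    (fun g _ => prod_nonneg fun i _ => hB i _) (mem_filter.2 ⟨mem_univ f, hf⟩)

lemma abs_det_le_prod_sum (A : Matrix ι ι ℝ) : |A.det| ≤ ∏ i, ∑ k, |A i k| := by
  rw [prod_univ_sum, Fintype.piFinset_univ,
    ← sum_perm_add_sum_not_injective fun g : ι → ι => ∏ i, |A i (g i)|]
  exact le_add_of_le_of_nonneg (abs_det_le_sum_perm A) (by positivity)

lemma le_row_sum_of_le_abs_det (hA : ∀ i, ∑ k, |A i k| ≤ 1) (ht : t ≤ |A.det|) (i : ι) :
    t ≤ ∑ k, |A i k| := by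
  refine ht.trans ((abs_det_le_prod_sum A).trans ?_)
  rw [← mul_prod_erase _ _ (mem_univ i)]
  exact mul_le_of_le_one_right (by positivity)
    (prod_le_one (fun l _ => by positivity) fun l _ => hA l)

lemma exists_perm_div_factorial_le_prod (A : Matrix ι ι ℝ) :
    ∃ σ : Equiv.Perm ι, |A.det| / (Fintype.card ι).factorial ≤ ∏ i, |A i (σ i)| := by
  by_contra! h
  have h_lt := sum_lt_sum_of_nonempty univ_nonempty fun σ (_ : σ ∈ univ) => h σ
  rw [sum_const, card_univ, Fintype.card_perm, nsmul_eq_mul, mul_div_cancel₀ _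
    (by positivity)] at h_lt
  exact h_lt.not_ge (abs_det_le_sum_perm A)

-- Expanding the product of the row sums, the terms not indexed by permutations add up to at most
-- `1 - t`; redirecting `σ` to `k` at the single row `i` produces one of them.
lemma abs_le_of_ne_perm (hA : ∀ i, ∑ k, |A i k| ≤ 1) (ht₀ : 0 < t) (ht : t ≤ |A.det|)
    {σ : Equiv.Perm ι} (hσ : t / (Fintype.card ι).factorial ≤ ∏ i, |A i (σ i)|) {i k : ι}
    (hk : k ≠ σ i) : |A i k| ≤ (1 - t) * (Fintype.card ι).factorial / t := by
  have h_not_inj : ¬ (Function.update σ i k).Injective := fun h_inj => by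
    have h_ne : σ.symm k ≠ i := fun h_eq => hk (by rw [← h_eq, σ.apply_symm_apply])
    refine h_ne (h_inj ?_)
    rw [Function.update_self, Function.update_of_ne h_ne, σ.apply_symm_apply]
  have h_le_one : |A i (σ i)| ≤ 1 :=
    (single_le_sum (f := fun k => |A i k|) (fun _ _ => abs_nonneg _) (mem_univ _)).trans (hA i)
  have h_erase : t / (Fintype.card ι).factorial ≤ ∏ l ∈ univ.erase i, |A l (σ l)| := by
    refine hσ.trans ?_
    rw [← mul_prod_erase _ _ (mem_univ i)]
    exact mul_le_of_le_one_left (by positivity) h_le_one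
  have h_mul : |A i k| * (t / (Fintype.card ι).factorial) ≤ 1 - t := calc
    _ ≤ |A i k| * ∏ l ∈ univ.erase i, |A l (σ l)| := by gcongr
    _ = ∏ l, |A l (Function.update σ i k l)| := (prod_update_comp (fun l m => |A l m|) σ i k).symm
    _ ≤ ∏ i, ∑ k, |A i k| - ∑ σ : Equiv.Perm ι, ∏ i, |A i (σ i)| := by
      linarith [sum_perm_add_prod_le_prod_sum (fun i k => abs_nonneg (A i k)) h_not_inj]
    _ ≤ 1 - t := sub_le_sub (prod_le_one (fun l _ => by positivity) fun l _ => hA l)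
      (ht.trans (abs_det_le_sum_perm A))
  rw [le_div_iff₀ ht₀]
  rwa [← mul_div_assoc, div_le_iff₀ (by positivity)] at h_mul

lemma exists_perm_le_two_mul_abs_sub (hA : ∀ i, ∑ k, |A i k| ≤ 1) (ht₀ : 0 < t)
    (ht : t ≤ |A.det|) :
    ∃ σ : Equiv.Perm ι, ∀ i,
      t - 2 * (Fintype.card ι * ((1 - t) * (Fintype.card ι).factorial / t))
        ≤ 2 * |A i (σ i)| - ∑ k, |A i k| := by
  obtain ⟨σ, hσ⟩ := exists_perm_div_factorial_le_prod A
  have hσ_t : t / (Fintype.card ι).factorial ≤ ∏ i, |A i (σ i)| := le_trans (by gcongr) hσ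
  refine ⟨σ, fun i => ?_⟩
  set η := (1 - t) * (Fintype.card ι).factorial / t
  have hη₀ : 0 ≤ η := by
    have ht₁ : 0 ≤ 1 - t := sub_nonneg.2 ((le_row_sum_of_le_abs_det hA ht i).trans (hA i))
    positivity
  have h_off : ∑ k ∈ univ.erase (σ i), |A i k| ≤ Fintype.card ι * η := calc
    _ ≤ #(univ.erase (σ i)) • η := sum_le_card_nsmul _ _ _ fun k hk =>
      abs_le_of_ne_perm hA ht₀ ht hσ_t (ne_of_mem_erase hk)
    _ ≤ Fintype.card ι * η := by
      rw [nsmul_eq_mul]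
      gcongr
      exact card_le_univ _
  have h_split := add_sum_erase univ (fun k => |A i k|) (mem_univ (σ i))
  linarith [le_row_sum_of_le_abs_det hA ht i]

lemma eventually_sum_abs_le_of_le_abs_det (ι : Type*) [Fintype ι] [DecidableEq ι] {ε : ℝ}
    (hε : 0 < ε) :
    ∀ᶠ t in 𝓝 (1 : ℝ), ∀ A : Matrix ι ι ℝ, (∀ i, A i ∈ crossPolytope ι) → t ≤ |A.det| →
      ∀ y, y ᵥ* A ∈ crossPolytope ι → ∑ i, |y i| ≤ 1 + ε := by
  have h_cont : ContinuousAt (fun t : ℝ =>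
      t - 2 * (Fintype.card ι * ((1 - t) * (Fintype.card ι).factorial / t))) 1 := by
    fun_prop (disch := norm_num)
  have h_lt : (1 + ε)⁻¹ < 1 - 2 * (Fintype.card ι *
      ((1 - 1 : ℝ) * (Fintype.card ι).factorial / 1)) := by
    simpa using inv_lt_one_of_one_lt₀ (by linarith)
  filter_upwards [h_cont.eventually (lt_mem_nhds h_lt), lt_mem_nhds zero_lt_one]
    with t ht_lt ht₀ A hA ht y hy
  obtain ⟨σ, hσ⟩ := exists_perm_le_two_mul_abs_sub hA ht₀ ht
  have h_le := (mul_sum_abs_le_sum_abs_vecMul (fun i => ht_lt.le.trans (hσ i)) y).trans hy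
  rwa [inv_mul_le_iff₀ (by linarith), mul_one] at h_le

end NearPermutation

section LinearInvariance

open Matrix

variable {ι : Type*} [Fintype ι] [DecidableEq ι]

lemma dotPolar_image_mulVec (A : Matrix ι ι ℝ) (K : Set (ι → ℝ)) :
    dotPolar (A.mulVec '' K) = (Matrix.toLin' Aᵀ) ⁻¹' dotPolar K := by
  ext y
  simp only [dotPolar, Set.forall_mem_image, Set.mem_preimage, Set.mem_ofPred_eq,
    Matrix.toLin'_apply, Matrix.mulVec_transpose, dotProduct_comm _ y, Matrix.dotProduct_mulVec,
    dotProduct_comm _ (y ᵥ* A)]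

lemma volume_image_mulVec_mul_volume_dotPolar {A : Matrix ι ι ℝ} (hA : A.det ≠ 0)
    (K : Set (ι → ℝ)) :
    volume (A.mulVec '' K) * volume (dotPolar (A.mulVec '' K))
      = volume K * volume (dotPolar K) := by
  have h_image : volume (A.mulVec '' K) = ENNReal.ofReal |A.det| * volume K := by
    rw [← LinearMap.det_toLin']
    exact Measure.addHaar_image_linearMap volume (Matrix.toLin' A) K
  have h_preimage : volume (dotPolar (A.mulVec '' K))
      = ENNReal.ofReal |A.det⁻¹| * volume (dotPolar K) := by
    have h_det : LinearMap.det (Matrix.toLin' Aᵀ) = A.det := by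
      rw [LinearMap.det_toLin', Matrix.det_transpose]
    rw [dotPolar_image_mulVec, Measure.addHaar_preimage_linearMap volume (by rwa [h_det]), h_det]
  have h_cancel : ENNReal.ofReal |A.det| * ENNReal.ofReal |A.det⁻¹| = 1 := by
    rw [← ENNReal.ofReal_mul (abs_nonneg _), ← abs_mul, mul_inv_cancel₀ hA, abs_one,
      ENNReal.ofReal_one]
  rw [h_image, h_preimage, mul_mul_mul_comm, h_cancel, one_mul]

end LinearInvariance

section Auerbach

open Finset Topology Matrix

variable {ι : Type*} [Fintype ι] {K S : Set (ι → ℝ)} {δ ε : ℝ} {y : ι → ℝ}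

lemma dotPolar_subset_crossPolytope (hK : Metric.closedBall 0 1 ⊆ K) :
    dotPolar K ⊆ crossPolytope ι := fun y hy => by
  choose s hs₀ hs using fun i => exists_sign_mul_abs_eq (y i)
  have h_abs (i : ι) : |y i| = s i * y i := by
    linear_combination (s i : ℝ) * hs i - |y i| * coe_sign_mul_self (hs₀ i)
  have h_dot := hy (signVec s) (hK (mem_closedBall_zero_iff.2 (norm_signVec_le_one s)))
  exact (sum_congr rfl fun i _ => h_abs i).trans_le h_dot

lemma isCompact_dotPolar (hK : Metric.closedBall 0 1 ⊆ K) : IsCompact (dotPolar K) := by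
  refine Metric.isCompact_of_isClosed_isBounded (isClosed_dotPolar K)
    (Metric.isBounded_closedBall (x := 0) (r := 1) |>.subset fun y hy => ?_)
  rw [mem_closedBall_zero_iff, pi_norm_le_iff_of_nonneg zero_le_one]
  exact fun i => (single_le_sum (f := fun i => |y i|) (fun _ _ => abs_nonneg _)
    (mem_univ i)).trans (dotPolar_subset_crossPolytope hK hy)

variable [DecidableEq ι] {A : Matrix ι ι ℝ}

/-- `A` maximises `|det|` among the matrices with rows in `S`. -/
structure IsMaxDet (S : Set (ι → ℝ)) (A : Matrix ι ι ℝ) : Prop where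
  row_mem : ∀ i, A i ∈ S
  abs_det_le : ∀ B : Matrix ι ι ℝ, (∀ i, B i ∈ S) → |B.det| ≤ |A.det|

lemma exists_isMaxDet (hS : IsCompact S) (hS_ne : S.Nonempty) : ∃ A, IsMaxDet S A := by
  obtain ⟨A, hA, hA_max⟩ := (isCompact_univ_pi fun _ : ι => hS).exists_isMaxOn
    (Set.univ_pi_nonempty_iff.2 fun _ => hS_ne)
    (f := fun A : ι → ι → ℝ => |(Matrix.of A).det|)
    (Continuous.matrix_det (by fun_prop)).abs.continuousOn
  exact ⟨Matrix.of A, fun i => hA i trivial, fun B hB => hA_max fun i _ => hB i⟩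

lemma det_updateRow_eq_det_mul_dotProduct (hA : A.det ≠ 0) (j : ι) (y : ι → ℝ) :
    (A.updateRow j y).det = A.det * ((A⁻¹ *ᵥ Pi.single j 1) ⬝ᵥ y) := by
  have h_inv : A *ᵥ (A⁻¹ *ᵥ Pi.single j 1) = Pi.single j 1 := by
    rw [Matrix.mulVec_mulVec, Matrix.mul_nonsing_inv _ (isUnit_iff_ne_zero.2 hA),
      Matrix.one_mulVec]
  calc (A.updateRow j y).det = Matrix.cramer Aᵀ y j := (Matrix.cramer_transpose_apply A y j).symm
    _ = Matrix.cramer Aᵀ y ⬝ᵥ (A *ᵥ (A⁻¹ *ᵥ Pi.single j 1)) := by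
      rw [h_inv, dotProduct_single, mul_one]
    _ = (Aᵀ *ᵥ Matrix.cramer Aᵀ y) ⬝ᵥ (A⁻¹ *ᵥ Pi.single j 1) := by
      rw [Matrix.dotProduct_mulVec, Matrix.mulVec_transpose]
    _ = A.det * ((A⁻¹ *ᵥ Pi.single j 1) ⬝ᵥ y) := by
      rw [Matrix.mulVec_cramer, Matrix.det_transpose, smul_dotProduct, smul_eq_mul,
        dotProduct_comm]

lemma IsMaxDet.single_mem_image (h : IsMaxDet (dotPolar K) A) (hA : A.det ≠ 0) (hK : Convex ℝ K)
    (hK_closed : IsClosed K) (hK_zero : 0 ∈ K) (j : ι) : Pi.single j 1 ∈ A.mulVec '' K := by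
  refine ⟨A⁻¹ *ᵥ Pi.single j 1, ?_, ?_⟩
  · refine mem_of_forall_dotPolar_le_one hK hK_closed hK_zero fun y hy => ?_
    have h_det := h.abs_det_le (A.updateRow j y) fun i => by
      rcases eq_or_ne i j with rfl | hij
      · rwa [Matrix.updateRow_self]
      · rw [Matrix.updateRow_ne hij]
        exact h.row_mem i
    rw [det_updateRow_eq_det_mul_dotProduct hA, abs_mul] at h_det
    exact (le_abs_self _).trans (le_of_mul_le_mul_left (by rwa [mul_one]) (abs_pos.2 hA))
  · rw [Matrix.mulVec_mulVec, Matrix.mul_nonsing_inv _ (isUnit_iff_ne_zero.2 hA),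
      Matrix.one_mulVec]

lemma IsMaxDet.inv_pow_le_abs_det (h : IsMaxDet (dotPolar K) A) (hδ : 0 < 1 + δ)
    (hK : K ⊆ Metric.closedBall 0 (1 + δ)) : ((1 + δ) ^ Fintype.card ι)⁻¹ ≤ |A.det| := by
  have h_det := h.abs_det_le ((1 + δ)⁻¹ • 1) fun i x hx => by
    have h_row : ((1 + δ)⁻¹ • (1 : Matrix ι ι ℝ)) i = (1 + δ)⁻¹ • Pi.single i 1 := by
      ext k
      simp [Matrix.one_apply, Pi.single_apply, eq_comm]
    rw [h_row, dotProduct_smul, dotProduct_single, mul_one, smul_eq_mul, inv_mul_le_one₀ hδ]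
    exact (le_abs_self _).trans ((norm_le_pi_norm x i).trans (mem_closedBall_zero_iff.1 (hK hx)))
  rwa [Matrix.det_smul, Matrix.det_one, mul_one, inv_pow, abs_of_pos (by positivity)] at h_det

lemma IsMaxDet.isCubePosition_image (h : IsMaxDet (dotPolar K) A) (hA : A.det ≠ 0)
    (hK : Convex ℝ K) (hK_compact : IsCompact K) (hK_neg : ∀ x ∈ K, -x ∈ K) (hK_zero : 0 ∈ K)
    (h_sum : ∀ y, y ᵥ* A ∈ dotPolar K → ∑ i, |y i| ≤ 1 + ε) :
    IsCubePosition (A.mulVec '' K) ε where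
  convex := hK.linear_image (Matrix.toLin' A)
  isClosed := (hK_compact.image
    (Matrix.toLin' A).continuous_of_finiteDimensional).isClosed
  neg_mem := by
    rintro _ ⟨x, hx, rfl⟩
    exact ⟨-x, hK_neg x hx, Matrix.mulVec_neg x A⟩
  norm_le_one := by
    rintro _ ⟨x, hx, rfl⟩
    refine (pi_norm_le_iff_of_nonneg zero_le_one).2 fun i => ?_
    have h_pos := h.row_mem i x hx
    have h_neg := h.row_mem i (-x) (hK_neg x hx)
    rw [neg_dotProduct] at h_neg
    rw [Real.norm_eq_abs, Matrix.mulVec, dotProduct_comm, abs_le]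
    exact ⟨by linarith, h_pos⟩
  single_mem := h.single_mem_image hA hK hK_compact.isClosed hK_zero
  sum_abs_le y hy := by
    rw [dotPolar_image_mulVec, Set.mem_preimage, Matrix.toLin'_apply, Matrix.mulVec_transpose] at hy
    exact h_sum y hy

lemma IsCubePosition.exists_sum_abs_eq (h : IsCubePosition K ε) :
    ∃ δ ≤ ε, IsCubePosition K δ ∧ ∃ ξ ∈ dotPolar K, ∑ i, |ξ i| = 1 + δ := by
  obtain ⟨ξ, hξ, hξ_max⟩ := h.isCompact_dotPolar.exists_isMaxOn ⟨0, zero_mem_dotPolar K⟩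
    (f := fun y : ι → ℝ => ∑ i, |y i|) (by fun_prop)
  refine ⟨∑ i, |ξ i| - 1, by linarith [h.sum_abs_le ξ hξ], { h with sum_abs_le := fun y hy => ?_ },
    ξ, hξ, by ring⟩
  rw [add_sub_cancel]
  exact hξ_max hy

theorem exists_pos_four_pow_div_factorial_le_of_closedBall (ι : Type*) [Fintype ι]
    [Nontrivial ι] :
    ∃ δ > 0, ∀ K : Set (ι → ℝ), Convex ℝ K → IsCompact K → (∀ x ∈ K, -x ∈ K) →
      Metric.closedBall 0 1 ⊆ K → K ⊆ Metric.closedBall 0 (1 + δ) →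
        (4 : ℝ≥0∞) ^ Fintype.card ι / (Fintype.card ι).factorial
          ≤ volume K * volume (dotPolar K) := by
  classical
  obtain ⟨ε, hε, h_min⟩ := exists_pos_four_pow_div_factorial_le (ι := ι)
  have h_tendsto : ContinuousAt (fun δ : ℝ => ((1 + δ) ^ Fintype.card ι)⁻¹) 0 := by
    fun_prop (disch := simp)
  have h_ev : ∀ᶠ t in 𝓝 (((1 + 0 : ℝ) ^ Fintype.card ι)⁻¹), ∀ A : Matrix ι ι ℝ,
      (∀ i, A i ∈ crossPolytope ι) → t ≤ |A.det| →
        ∀ y, y ᵥ* A ∈ crossPolytope ι → ∑ i, |y i| ≤ 1 + ε := by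
    simpa using eventually_sum_abs_le_of_le_abs_det ι hε
  obtain ⟨δ, h_sum, hδ⟩ := ((h_tendsto.eventually h_ev).filter_mono nhdsWithin_le_nhds |>.and
    (self_mem_nhdsWithin (s := Set.Ioi 0))).exists
  refine ⟨δ, hδ, fun K hK hK_compact hK_neg hK_lower hK_upper => ?_⟩
  have hδ_pos : 0 < 1 + δ := add_pos one_pos hδ
  obtain ⟨A, hA⟩ := exists_isMaxDet (isCompact_dotPolar hK_lower) ⟨0, zero_mem_dotPolar K⟩
  have hA_det := hA.inv_pow_le_abs_det hδ_pos hK_upper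
  have hA_ne : A.det ≠ 0 := abs_pos.1 ((inv_pos.2 (pow_pos hδ_pos _)).trans_le hA_det)
  have hA_cube : IsCubePosition (A.mulVec '' K) ε :=
    hA.isCubePosition_image hA_ne hK hK_compact hK_neg
      (hK_lower (Metric.mem_closedBall_self zero_le_one)) fun y hy =>
        h_sum A (fun i => dotPolar_subset_crossPolytope hK_lower (hA.row_mem i)) hA_det y
          (dotPolar_subset_crossPolytope hK_lower hy)
  obtain ⟨η, hη, hA_cube', hξ⟩ := hA_cube.exists_sum_abs_eq
  rw [← volume_image_mulVec_mul_volume_dotPolar hA_ne]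
  exact h_min _ η hA_cube' hη hξ

end Auerbach

section Transfer

variable {n : ℕ}

lemma volume_image_mul_volume_dotPolar {ι : Type*} [Fintype ι] (T : (ι → ℝ) ≃ₗ[ℝ] (ι → ℝ))
    (K : Set (ι → ℝ)) :
    volume (T '' K) * volume (dotPolar (T '' K)) = volume K * volume (dotPolar K) := by
  classical
  have h_mulVec : (LinearMap.toMatrix' (T : (ι → ℝ) →ₗ[ℝ] (ι → ℝ))).mulVec = T :=
    funext fun x => LinearMap.toMatrix'_mulVec _ x
  rw [← h_mulVec]
  refine volume_image_mulVec_mul_volume_dotPolar ?_ K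
  rw [LinearMap.det_toMatrix']
  exact T.isUnit_det'.ne_zero

lemma dotPolar_preimage_toLp (K : Set (EuclideanSpace ℝ (Fin n))) :
    dotPolar (WithLp.toLp 2 ⁻¹' K) = WithLp.toLp 2 ⁻¹' polarBody K := by
  ext y
  simp only [dotPolar, polarBody, Set.mem_preimage, Set.mem_ofPred_eq,
    (WithLp.toLp_surjective 2).forall, EuclideanSpace.inner_toLp_toLp, star_trivial,
    dotProduct_comm y]

lemma volume_preimage_toLp (K : Set (EuclideanSpace ℝ (Fin n))) :
    volume (WithLp.toLp 2 ⁻¹' K : Set (Fin n → ℝ)) = volume K :=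
  (EuclideanSpace.volume_preserving_symm_measurableEquiv_toLp
    (Fin n)).symm.measure_preimage_equiv K

lemma volume_image_mul_volume_dotPolar_eq_polarBody
    (L : EuclideanSpace ℝ (Fin n) ≃ₗ[ℝ] (Fin n → ℝ)) (K : Set (EuclideanSpace ℝ (Fin n))) :
    volume (L '' K) * volume (dotPolar (L '' K)) = volume K * volume (polarBody K) := by
  have h_image : L '' K = (WithLp.linearEquiv 2 ℝ (Fin n → ℝ)).symm.trans L ''
      (WithLp.toLp 2 ⁻¹' K) := by
    conv_lhs => rw [← Set.image_preimage_eq K (WithLp.toLp_surjective 2), ← Set.image_comp]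
    rfl
  rw [h_image, volume_image_mul_volume_dotPolar, dotPolar_preimage_toLp, volume_preimage_toLp,
    volume_preimage_toLp]

lemma linearEquiv_image_cube (n : ℕ) :
    WithLp.linearEquiv 2 ℝ (Fin n → ℝ) '' cube n = Metric.closedBall 0 1 := by
  ext x
  rw [mem_closedBall_zero_iff, pi_norm_le_iff_of_nonneg zero_le_one]
  exact ⟨by rintro ⟨y, hy, rfl⟩; exact hy, fun hx => ⟨WithLp.toLp 2 x, hx, rfl⟩⟩

lemma linearEquiv_image_smul_cube {r : ℝ} (hr : 0 ≤ r) :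
    WithLp.linearEquiv 2 ℝ (Fin n → ℝ) '' (r • cube n) = Metric.closedBall 0 r := by
  rw [image_smul_set, linearEquiv_image_cube, smul_closedBall _ _ zero_le_one, smul_zero, mul_one,
    Real.norm_of_nonneg hr]

end Transfer

/-- the unit cube is a local minimizer of the Mahler volume product:
if the Banach–Mazur distance from an origin-symmetric convex body `K` to the cube is
at most `1 + δ(n)`, then `volₙ(K)·volₙ(K*) ≥ 𝒫(B∞ⁿ) = 4ⁿ/n!`. -/
theorem cube_local_min (n : ℕ) (hn : 2 ≤ n) :
    ∃ δ : ℝ, 0 < δ ∧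
      ∀ K : Set (EuclideanSpace ℝ (Fin n)),
        Convex ℝ K → IsCompact K → (interior K).Nonempty → K = -K →
        (∃ T : EuclideanSpace ℝ (Fin n) ≃ₗ[ℝ] EuclideanSpace ℝ (Fin n),
          cube n ⊆ T '' K ∧ T '' K ⊆ (1 + δ) • cube n) →
        volume K * volume (polarBody K) ≥ (4 : ℝ≥0∞) ^ n / (n.factorial : ℝ≥0∞) := by
  have : Nontrivial (Fin n) := Fin.nontrivial_iff_two_le.2 hn
  obtain ⟨δ, hδ, h_min⟩ := exists_pos_four_pow_div_factorial_le_of_closedBall (Fin n)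
  rw [Fintype.card_fin] at h_min
  refine ⟨δ, hδ, ?_⟩
  rintro K hK_convex hK_compact - hK_symm ⟨T, hT_lower, hT_upper⟩
  let e := WithLp.linearEquiv 2 ℝ (Fin n → ℝ)
  let L := T.trans e
  have h_image : L '' K = e '' (T '' K) := Set.image_comp e T K
  rw [← volume_image_mul_volume_dotPolar_eq_polarBody L]
  refine h_min (L '' K) (hK_convex.linear_image L.toLinearMap)
    (hK_compact.image L.toLinearMap.continuous_of_finiteDimensional) ?_ ?_ ?_
  · rintro _ ⟨x, hx, rfl⟩
    exact ⟨-x, Set.mem_neg.1 (hK_symm ▸ hx), map_neg L x⟩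
  · rw [h_image, ← linearEquiv_image_cube]
    exact Set.image_mono hT_lower
  · rw [h_image, ← linearEquiv_image_smul_cube (by positivity)]
    exact Set.image_mono hT_upper
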